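/- Fix an integer k ≥ 1 and suppose ρ : ℕ → (0,1) satisfies Φ_{(1)}(ρ(n)) = n for all sufficiently large n. Then p_{ℙ_k}(n+1) − p_{ℙ_k}(n) = ( ρ(n)^{−n} · log(1/ρ(n)) · Ψ(ρ(n)) / √(2π · Φ_{(2)}(ρ(n))) ) · ( 1 + O(n^{−1/(2k+3)}) ) as n → ∞. -/

import Mathlib

/-!
The proof is a saddle-point argument on the circle `|z| = ρ(n)`. Throughout `ρ = e^{-1/X}`, and
`Φₘ` stands for `Φ_{(m)}(ρ)`.

Unique factorisation identifies partitions of `n` into `k`-th powers of primes with integers `m ≥ 1`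
whose prime factors `p`, with multiplicity, have `∑ p^k = n`. The Euler product of the completely
multiplicative function `p ↦ z^{p^k}` therefore gives `∑ pPk k n z^n = Ψ(z)` (`hasSum_pPk`). By Cauchy's
formula and `Φ₁ = n`, the difference `pPk k (n+1) - pPk k n` is `ρ^{-n-1} Ψ(ρ) / 2π` times the integral
over `[-π, π]` of `e^{S(θ)} (e^{-iθ} - ρ)`, where `S(θ) = -Φ₂ θ²/2 + O(Φ₃ |θ|³)` (`diff_eq_integral`,
`sadS_taylor`). Where `Φ₃ |θ|³ ≤ 1` the integrand is compared with `e^{-Φ₂ θ²/2} (1 - ρ - iθ)`; its odd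
part integrates to zero and the even part gives the main term, with error terms controlled by
absolute Gaussian moments (`laplace`).

For the other `θ` one has `|e^{S(θ)}| = exp (-∑ w (1 - cos λθ))`, summed over the terms of `Φ(ρ)`, and a
lower bound `≫ X^{1/(6k)}` for the sum is enough (`minor_bound`). It is obtained without estimates for
exponential sums over primes. If the sum over primes `p ≤ P` with `P ≈ X^{1/k}` were small, then
`p^k θ / 2π` would be very close to an integer for almost all of these primes, hence on a subset of
`{1, …, P}` of density at least `P^{-u}`, `u` being as small as desired. An inverse theorem with
polynomial losses (`poly_inverse`), proved by differencing along popular differences, shows that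
`θ / 2π` is then within `P^{-k}` of a fraction with denominator at most `P^{1/10}`; such `θ` are treated
directly (`minor_arc`).

Rankin's trick gives `Φₘ ≪ X^{m + 1/k + ε}`, and Chebyshev's lower bound for the number of primes gives
`Φ₂ ≫ X^{2 + 1/k - ε}`. The relative error is thus `O(X^{-1/(2k) + 3ε})`, and `n = Φ₁ ≪ X^{1 + 1/k + ε}`
turns it into `O(n^{-1/(2k+3)})` (`rel_error_X`).
-/

open Filter

/-- Number of partitions of `n` with all parts `k`-th powers of primes. -/
noncomputable def pPk (k n : ℕ) : ℕ :=
  Nat.card {P : n.Partition // ∀ i ∈ P.parts, ∃ p : ℕ, p.Prime ∧ i = p ^ k}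

/-- `Φ_{(m)}(ρ) = (ρ d/dρ)^m Φ(ρ) = ∑_{j≥1} ∑_p j^{m-1} p^{km} ρ^{j p^k}`.
    For `m = 0` this is `Φ(ρ)` itself, so `Ψ(ρ) = exp (Phim k 0 ρ)`. -/
noncomputable def Phim (k m : ℕ) (ρ : ℝ) : ℝ :=
  ∑' (j : ℕ+) (p : Nat.Primes),
    (j : ℝ) ^ ((m : ℤ) - 1) * ((p : ℕ) : ℝ) ^ (k * m) * ρ ^ ((j : ℕ) * (p : ℕ) ^ k)

/-! ### An inverse theorem for polynomials close to integers -/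

/-- `NearInt x η`: the real `x` lies within `η` of an integer. -/
def NearInt (x η : ℝ) : Prop := ∃ z : ℤ, |x - z| ≤ η

/-- `IsPolyLike k c f`: every `k`-fold iterated difference of `f : ℕ → ℝ` with steps `h₁, …, h_k`
is the constant `h₁ ⋯ h_k c`. -/
def IsPolyLike : ℕ → ℝ → (ℕ → ℝ) → Prop
  | 0, c, f => ∀ m, f m = c
  | k + 1, c, f => ∀ h : ℕ, IsPolyLike k (h * c) (fun m => f (m + h) - f m)

/-- A polynomial of degree at most `k` is polynomial-like; by induction, as a difference with step
`h` lowers the degree and multiplies the top coefficient by `k h`. -/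
lemma isPolyLike_polynomial (k : ℕ) : ∀ p : Polynomial ℝ, p.natDegree ≤ k →
    IsPolyLike k (k.factorial * p.coeff k) (fun m => p.eval (m : ℝ)) := by
  induction k with
  | zero =>
    intro p hp m
    rw [Polynomial.eq_C_of_natDegree_le_zero hp]
    simp
  | succ k ih =>
    intro p hp h
    have hd : (Polynomial.taylor (h : ℝ) p - p).natDegree ≤ k := by
      rw [Polynomial.natDegree_le_iff_coeff_eq_zero]
      intro N hN
      rw [Polynomial.coeff_sub, Polynomial.taylor_coeff]
      rcases Nat.lt_or_ge (k + 1) N with h1 | h1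
      · rw [Polynomial.hasseDeriv_eq_zero_of_lt_natDegree p N (by omega),
          Polynomial.coeff_eq_zero_of_natDegree_lt (by omega)]
        simp
      · have : N = k + 1 := by omega
        subst this
        have h2 : (Polynomial.hasseDeriv (k + 1) p).natDegree < 1 := by
          have := Polynomial.natDegree_hasseDeriv_le p (k + 1)
          omega
        rw [Polynomial.eval_eq_sum_range' h2]
        simp [Polynomial.hasseDeriv_coeff]
    have hc : (Polynomial.taylor (h : ℝ) p - p).coeff k = (k + 1) * h * p.coeff (k + 1) := by
      rw [Polynomial.coeff_sub, Polynomial.taylor_coeff]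
      have h2 : (Polynomial.hasseDeriv k p).natDegree < 2 := by
        have := Polynomial.natDegree_hasseDeriv_le p k
        omega
      rw [Polynomial.eval_eq_sum_range' h2]
      simp [Polynomial.hasseDeriv_coeff, Finset.sum_range_succ, add_comm 1 k]
      ring
    have := ih _ hd
    rw [hc] at this
    convert this using 1
    · rw [Nat.factorial_succ]; push_cast; ring
    · funext m
      simp [Polynomial.taylor_eval, add_comm]

lemma isPolyLike_pow (k : ℕ) (α : ℝ) :
    IsPolyLike k (k.factorial * α) (fun m => (m : ℝ) ^ k * α) := by
  have := isPolyLike_polynomial k (Polynomial.C α * Polynomial.X ^ k)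
    (Polynomial.natDegree_C_mul_X_pow_le α k)
  rw [Polynomial.coeff_C_mul_X_pow, if_pos rfl] at this
  have e : (fun m : ℕ => (m : ℝ) ^ k * α) =
      fun m : ℕ => (Polynomial.C α * Polynomial.X ^ k).eval (m : ℝ) := by
    funext m
    rw [Polynomial.eval_mul, Polynomial.eval_C, Polynomial.eval_pow, Polynomial.eval_X, mul_comm]
  rw [e]
  exact this

/-- A finite set of integers of diameter at most `D` has at most `D + 1` elements. -/
lemma card_le_of_diam (s : Finset ℤ) (D : ℝ) (hD : 0 ≤ D)
    (h : ∀ x ∈ s, ∀ y ∈ s, (x : ℝ) - y ≤ D) : (s.card : ℝ) ≤ D + 1 := by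
  rcases s.eq_empty_or_nonempty with rfl | hs
  · simp; linarith
  have hsub : s ⊆ Finset.Icc (s.min' hs) (s.max' hs) := fun x hx =>
    Finset.mem_Icc.2 ⟨s.min'_le x hx, s.le_max' x hx⟩
  have h1 := Finset.card_le_card hsub
  rw [Int.card_Icc] at h1
  have h2 := h _ (s.max'_mem hs) _ (s.min'_mem hs)
  have h3 : s.min' hs ≤ s.max' hs := s.min'_le _ (s.max'_mem hs)
  have h4 : (s.card : ℤ) ≤ s.max' hs + 1 - s.min' hs := by omega
  have h5 : (s.card : ℝ) ≤ s.max' hs + 1 - s.min' hs := by exact_mod_cast h4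
  linarith

/-- The integers `s` in a long interval for which `s β` is close to an integer are few, unless `β`
is itself tiny: the nearest integers to `s β` are few, and so are the `s` sharing one. -/
lemma card_near_le (s : Finset ℤ) (β η L : ℝ) (hβ : 0 < |β|) (hη : 0 ≤ η)
    (hL : ∀ x ∈ s, ∀ y ∈ s, (x : ℝ) - y ≤ L) (hL0 : 0 ≤ L)
    (hn : ∀ x ∈ s, NearInt (x * β) η) :
    (s.card : ℝ) ≤ (L * |β| + 2 * η + 1) * (2 * η / |β| + 1) := by
  classical
  choose! N hN using hn
  have hfib : ∀ z ∈ s.image N, ((s.filter fun x => N x = z).card : ℝ) ≤ 2 * η / |β| + 1 := by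
    intro z _
    apply card_le_of_diam _ _ (by positivity)
    intro x hx y hy
    rw [Finset.mem_filter] at hx hy
    have h1 := hN x hx.1
    have h2 := hN y hy.1
    rw [hx.2] at h1
    rw [hy.2] at h2
    rw [le_div_iff₀ hβ]
    have h3 : |(x : ℝ) * β - y * β| ≤ 2 * η := by
      have := abs_sub_le ((x : ℝ) * β) z (y * β)
      rw [abs_sub_comm (z : ℝ)] at this
      linarith
    rw [← sub_mul, abs_mul] at h3
    refine le_trans ?_ h3
    gcongr
    exact le_abs_self _
  have himg : ((s.image N).card : ℝ) ≤ (L * |β| + 2 * η) + 1 := by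
    apply card_le_of_diam _ _ (by positivity)
    intro a ha b hb
    obtain ⟨x, hx, rfl⟩ := Finset.mem_image.1 ha
    obtain ⟨y, hy, rfl⟩ := Finset.mem_image.1 hb
    have h1 := abs_le.1 (hN x hx)
    have h2 := abs_le.1 (hN y hy)
    have h3 : |(x : ℝ) * β - y * β| ≤ L * |β| := by
      rw [← sub_mul, abs_mul]
      gcongr
      exact abs_le.2 ⟨by linarith [hL y hy x hx], hL x hx y hy⟩
    have := le_abs_self ((x : ℝ) * β - y * β)
    linarith [h1.1, h1.2, h2.1, h2.2]
  have h0 : (s.card : ℝ) = ∑ z ∈ s.image N, ((s.filter fun x => N x = z).card : ℝ) := by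
    exact_mod_cast Finset.card_eq_sum_card_image N s
  rw [h0]
  calc _ ≤ ∑ z ∈ s.image N, (2 * η / |β| + 1) := Finset.sum_le_sum hfib
    _ = (s.image N).card * (2 * η / |β| + 1) := by rw [Finset.sum_const, nsmul_eq_mul]
    _ ≤ _ := by gcongr

/-- If `h α` is within `η` of an integer for a proportion `1 / T` of the `h ≤ P`, then some multiple
`q α` with `q ≤ T ^ 5` is within `T ^ 5 η / P` of an integer. Losses polynomial in `T` are harmless,
since `T` will be a tiny power of `P`. -/
lemma linear_inverse (T : ℝ) (hT : 8 ≤ T) (P : ℕ) (H : Finset ℕ) (α η : ℝ) (hη : 0 ≤ η)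
    (hH : H ⊆ Finset.Icc 1 P) (hcard : (P : ℝ) ≤ T * H.card)
    (hPT : T ^ 5 ≤ P) (hηT : η * T ^ 5 ≤ 1) (hn : ∀ h ∈ H, NearInt (h * α) η) :
    ∃ q : ℕ, 1 ≤ q ∧ (q : ℝ) ≤ T ^ 5 ∧ NearInt (q * α) (T ^ 5 * η / P) := by
  classical
  have hT0 : 0 < T := by linarith
  have hP0 : (0 : ℝ) < P := lt_of_lt_of_le (by positivity) hPT
  have hT2 : 8 ^ 2 ≤ T ^ 2 := by gcongr
  have hT3 : 8 ^ 3 ≤ T ^ 3 := by gcongr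
  -- Pigeonhole: two elements of `H` lie at distance at most `2 T`; `q` is their difference.
  obtain ⟨q, hq1, hq2, hq3⟩ : ∃ q : ℕ, 1 ≤ q ∧ (q : ℝ) ≤ 2 * T ∧ NearInt (q * α) (2 * η) := by
    set M : ℕ := ⌊2 * T⌋₊ with hM
    have hM1 : (M : ℝ) ≤ 2 * T := Nat.floor_le (by linarith)
    have hM2 : 2 * T < M + 1 := Nat.lt_floor_add_one _
    have hM0 : 0 < M := by
      rw [hM, Nat.floor_pos]; linarith
    have hlt : (Finset.range (P / M + 1)).card < H.card := by
      rw [Finset.card_range]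
      have h1 : ((P / M : ℕ) : ℝ) ≤ P / M := Nat.cast_div_le
      have h2 : (P : ℝ) / M ≤ P / (2 * T - 1) := by
        gcongr
        · linarith
        · linarith
      have h3 : (P : ℝ) / (2 * T - 1) + 1 < P / T := by
        rw [div_add_one (by linarith), div_lt_div_iff₀ (by linarith) hT0]
        nlinarith [pow_pos hT0 3, pow_pos hT0 4, pow_pos hT0 5]
      have h4 : (P : ℝ) / T ≤ H.card := by
        rw [div_le_iff₀ hT0]; linarith
      have : ((P / M + 1 : ℕ) : ℝ) < H.card := by push_cast; linarith
      exact_mod_cast this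
    obtain ⟨x, hx, y, hy, hxy, he⟩ := Finset.exists_ne_map_eq_of_card_lt_of_maps_to
      (f := fun h => h / M) hlt (by
        intro h hh
        have := (Finset.mem_Icc.1 (hH hh)).2
        simp only [Finset.coe_range, Set.mem_Iio]
        have := Nat.div_le_div_right (c := M) this
        omega)
    wlog hlt' : x < y generalizing x y
    · exact this y hy x hx hxy.symm he.symm (by omega)
    refine ⟨y - x, by omega, ?_, ?_⟩
    · have h1 := Nat.div_add_mod x M
      have h2 := Nat.div_add_mod y M
      have h3 := Nat.mod_lt y hM0
      have he : x / M = y / M := he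
      rw [he] at h1
      have : y - x ≤ M := by omega
      exact le_trans (by exact_mod_cast this) hM1
    · obtain ⟨a, ha⟩ := hn x hx
      obtain ⟨b, hb⟩ := hn y hy
      refine ⟨b - a, ?_⟩
      rw [Nat.cast_sub hlt'.le]
      push_cast
      rw [show ((y : ℝ) - x) * α - (b - a) = (y * α - b) - (x * α - a) by ring]
      linarith [abs_sub (y * α - b) (x * α - a)]
  obtain ⟨a, ha⟩ := hq3
  set β : ℝ := q * α - a with hβ
  have hq0 : (0 : ℝ) < q := by exact_mod_cast hq1
  refine ⟨q, hq1, ?_, a, ?_⟩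
  · calc (q : ℝ) ≤ 2 * T := hq2
      _ ≤ T ^ 4 * T := by
        gcongr
        nlinarith
      _ = T ^ 5 := by ring
  rw [← hβ]
  by_cases hb0 : |β| = 0
  · rw [hb0]; positivity
  have hbpos : 0 < |β| := lt_of_le_of_ne (abs_nonneg _) (Ne.symm hb0)
  -- In a popular residue class modulo `q`, `h = h₀ + q s` and `s β` is close to an integer, where
  -- `β = q α - a`; `card_near_le` then forces `β` to be as small as claimed.
  obtain ⟨r, hr, hrc⟩ := Finset.exists_le_card_fiber_of_nsmul_le_card_of_maps_to
    (s := H) (t := Finset.range q) (f := fun h => h % q) (b := (H.card : ℝ) / q)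
    (by intro h _; simpa using Nat.mod_lt _ hq1) (by simp; omega)
    (by rw [Finset.card_range, nsmul_eq_mul]; field_simp; rfl)
  set K := H.filter fun h => h % q = r with hK
  have hKpos : 0 < K.card := by
    have : (0 : ℝ) < (H.card : ℝ) / q := by
      have : (0 : ℝ) < H.card := by
        by_contra hcon
        nlinarith
      positivity
    have : (0 : ℝ) < K.card := lt_of_lt_of_le this hrc
    exact_mod_cast this
  obtain ⟨h0, hh0⟩ := Finset.card_pos.1 hKpos
  have hdiv : ∀ h ∈ K, ∃ s : ℤ, (h : ℤ) - h0 = q * s := by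
    intro h hh
    have h1 : h % q = r := (Finset.mem_filter.1 hh).2
    have h2 : h0 % q = r := (Finset.mem_filter.1 hh0).2
    have : (h0 : ℤ) ≡ h [ZMOD q] := by
      have : h0 ≡ h [MOD q] := by rw [Nat.ModEq, h1, h2]
      exact (Int.natCast_modEq_iff).2 this
    exact this.dvd
  choose! s hs using hdiv
  have hsR : ∀ h ∈ K, (h : ℝ) - h0 = q * s h := fun h hh => by exact_mod_cast hs h hh
  have hinj : Set.InjOn s K := by
    intro x hx y hy hxy
    have h1 := hs x hx
    have h2 := hs y hy
    rw [hxy] at h1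
    omega
  have hcardK : ((K.image s).card : ℝ) = K.card := by
    rw [Finset.card_image_of_injOn hinj]
  have hKH : ∀ h ∈ K, h ∈ H := fun h hh => (Finset.mem_filter.1 hh).1
  have hbound := card_near_le (K.image s) β (2 * η) (P : ℝ) hbpos (by positivity) (by
      intro x hx y hy
      obtain ⟨u, hu, rfl⟩ := Finset.mem_image.1 hx
      obtain ⟨v, hv, rfl⟩ := Finset.mem_image.1 hy
      have h1 := hsR u hu
      have h2 := hsR v hv
      have h3 := (Finset.mem_Icc.1 (hH (hKH u hu)))
      have h4 := (Finset.mem_Icc.1 (hH (hKH v hv)))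
      have h5 : (u : ℝ) ≤ P := by exact_mod_cast h3.2
      have h6 : (1 : ℝ) ≤ v := by exact_mod_cast h4.1
      have h7 : (1 : ℝ) ≤ q := by exact_mod_cast hq1
      by_contra hcon
      push Not at hcon
      nlinarith) hP0.le (by
      intro x hx
      obtain ⟨u, hu, rfl⟩ := Finset.mem_image.1 hx
      obtain ⟨b, hb⟩ := hn u (hKH u hu)
      obtain ⟨c, hc⟩ := hn h0 (hKH h0 hh0)
      refine ⟨b - c - s u * a, ?_⟩
      have h1 := hsR u hu
      have : (s u : ℝ) * β - ((b - c - s u * a : ℤ) : ℝ) = (u * α - b) - (h0 * α - c) := by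
        rw [hβ]; push_cast
        linear_combination (-α) * h1
      rw [this]
      linarith [abs_sub (u * α - b) (h0 * α - c)])
  rw [hcardK] at hbound
  have hlow : (P : ℝ) / (2 * T ^ 2) ≤ K.card := by
    refine le_trans ?_ hrc
    rw [div_le_div_iff₀ (by positivity) hq0]
    calc (P : ℝ) * q ≤ (T * H.card) * (2 * T) := by gcongr
      _ = _ := by ring
  have hη1 : η * T ^ 3 ≤ 1 := by nlinarith [pow_pos hT0 3, mul_nonneg hη (pow_pos hT0 3).le]
  have h4 : (P * |β| + 2 * (2 * η) + 1) * (2 * (2 * η) / |β| + 1)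
      ≤ 6 * η * P + 8 * η / |β| + 2 := by
    have e1 : 4 * η ≤ 1 := by nlinarith
    have : (P * |β| + 2 * (2 * η) + 1) * (2 * (2 * η) / |β| + 1)
      ≤ (P * |β| + 2) * (4 * η / |β| + 1) := by
      rw [show 2 * (2 * η) = 4 * η by ring]
      gcongr ?_ * _
      linarith
    refine this.trans ?_
    have : (P * |β| + 2) * (4 * η / |β| + 1) = 4 * η * P + P * |β| + 8 * η / |β| + 2 := by
      field_simp
      ring
    rw [this]
    nlinarith
  have h5 : (P : ℝ) / (2 * T ^ 2) ≤ 6 * η * P + 8 * η / |β| + 2 := hlow.trans (hbound.trans h4)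
  have h6 : 6 * η * P ≤ P / (8 * T ^ 2) := by
    rw [le_div_iff₀ (by positivity)]
    have : 48 * (η * T ^ 2) ≤ 1 := by nlinarith [mul_nonneg hη (pow_pos hT0 2).le]
    nlinarith
  have h7 : 2 ≤ (P : ℝ) / (8 * T ^ 2) := by
    rw [le_div_iff₀ (by positivity)]
    nlinarith [pow_pos hT0 2, pow_pos hT0 3]
  have h8 : (P : ℝ) / (4 * T ^ 2) ≤ 8 * η / |β| := by
    have : (P : ℝ) / (2 * T ^ 2) = P / (4 * T ^ 2) + P / (8 * T ^ 2) + P / (8 * T ^ 2) := by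
      field_simp; norm_num
    linarith
  rw [div_le_div_iff₀ (by positivity) hbpos] at h8
  rw [le_div_iff₀ hP0]
  calc |β| * P = P * |β| := by ring
    _ ≤ 8 * η * (4 * T ^ 2) := h8
    _ = 32 * T ^ 2 * η := by ring
    _ ≤ T ^ 5 * η := by
      gcongr
      nlinarith [pow_pos hT0 2]

/-- If `S` has density `1 / T` in `{1, …, P}`, then a proportion `T⁻³` of the `h ≤ P` are differences
of at least `P / T ^ 3` pairs of `S`. -/
lemma popular_differences (T : ℝ) (hT : 8 ≤ T) (P : ℕ) (S : Finset ℕ)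
    (hS : S ⊆ Finset.Icc 1 P) (hcard : (P : ℝ) ≤ T * S.card) (hP : 2 * T ≤ P) :
    (P : ℝ) ≤ T ^ 3 * ((Finset.Icc 1 P).filter fun h =>
      (P : ℝ) ≤ T ^ 3 * (S.filter fun m => m + h ∈ S).card).card := by
  classical
  have hT0 : 0 < T := by linarith
  have hP0 : (0 : ℝ) < P := by linarith
  set r : ℕ → ℕ := fun h => (S.filter fun m => m + h ∈ S).card with hr
  -- `W` counts the two-element subsets of `S`; each contributes to exactly one `r h`.
  set W : ℕ := ∑ m ∈ S, (S.filter fun m' => m < m').card with hW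
  have hW2 : W = ∑ m ∈ S, (S.filter fun m' => m' < m).card := by
    rw [hW]
    simp only [Finset.card_filter]
    exact Finset.sum_comm
  have hWW : W + W + S.card = S.card * S.card := by
    conv_lhs => rw [hW2]
    conv_lhs => enter [1, 1]; rw [← hW2, hW]
    rw [Finset.card_eq_sum_ones S, ← Finset.sum_add_distrib, ← Finset.sum_add_distrib,
      Finset.sum_mul]
    apply Finset.sum_congr rfl
    intro m hm
    rw [one_mul, Finset.card_filter, Finset.card_filter, ← Finset.sum_add_distrib]
    have : (1 : ℕ) = ∑ m' ∈ S, if m' = m then 1 else 0 := by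
      rw [Finset.sum_ite_eq' S m, if_pos hm]
    conv_lhs => rw [this]
    rw [← Finset.sum_add_distrib]
    apply Finset.sum_congr rfl
    intro x _
    rcases lt_trichotomy x m with h | h | h
    · simp [h, h.ne, not_lt.2 h.le, hm]
    · simp [h]
    · simp [h, h.ne', not_lt.2 h.le, hm]
  have hWr : W ≤ ∑ h ∈ Finset.Icc 1 P, r h := by
    simp only [hr, hW]
    have : ∑ h ∈ Finset.Icc 1 P, (S.filter fun m => m + h ∈ S).card =
        ∑ m ∈ S, ((Finset.Icc 1 P).filter fun h => m + h ∈ S).card := by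
      simp only [Finset.card_filter]
      exact Finset.sum_comm
    rw [this]
    apply Finset.sum_le_sum
    intro m _
    apply Finset.card_le_card_of_injOn (fun m' => m' - m)
    · intro x hx
      have hx' := Finset.mem_filter.1 hx
      have h1 := Finset.mem_Icc.1 (hS hx'.1)
      simp only [Finset.coe_filter, Finset.mem_Icc, Set.mem_ofPred_eq]
      refine ⟨⟨by omega, by omega⟩, ?_⟩
      rw [Nat.add_sub_cancel' hx'.2.le]
      exact hx'.1
    · intro x hx y hy hxy
      have hx' := (Finset.mem_filter.1 hx).2
      have hy' := (Finset.mem_filter.1 hy).2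
      simp only at hxy
      omega
  set B := (Finset.Icc 1 P).filter fun h => (P : ℝ) ≤ T ^ 3 * (r h : ℝ) with hB
  have hsum : (∑ h ∈ Finset.Icc 1 P, (r h : ℝ)) ≤ B.card * P + P * (P / T ^ 3) := by
    rw [← Finset.sum_filter_add_sum_filter_not (Finset.Icc 1 P)
      (fun h => (P : ℝ) ≤ T ^ 3 * (r h : ℝ))]
    apply add_le_add
    · calc _ ≤ ∑ h ∈ B, (P : ℝ) := by
            apply Finset.sum_le_sum
            intro h _
            have h1 : r h ≤ S.card := Finset.card_filter_le _ _
            have h2 : S.card ≤ P := by simpa using Finset.card_le_card hS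
            exact_mod_cast h1.trans h2
        _ = _ := by simp
    · calc _ ≤ ∑ h ∈ (Finset.Icc 1 P).filter (fun h => ¬ (P : ℝ) ≤ T ^ 3 * (r h : ℝ)),
              (P : ℝ) / T ^ 3 := by
            apply Finset.sum_le_sum
            intro h hh
            have := (Finset.mem_filter.1 hh).2
            rw [le_div_iff₀ (by positivity)]
            linarith
        _ = (((Finset.Icc 1 P).filter (fun h => ¬ (P : ℝ) ≤ T ^ 3 * (r h : ℝ))).card : ℝ)
              * (P / T ^ 3) := by rw [Finset.sum_const, nsmul_eq_mul]
        _ ≤ _ := by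
            gcongr
            simpa using Finset.card_filter_le (Finset.Icc 1 P)
              (fun h => ¬ (P : ℝ) ≤ T ^ 3 * (r h : ℝ))
  have hWR : (W : ℝ) ≤ ∑ h ∈ Finset.Icc 1 P, (r h : ℝ) := by exact_mod_cast hWr
  have hWWR : (W : ℝ) + W + S.card = S.card * S.card := by exact_mod_cast hWW
  have hs2 : (2 : ℝ) ≤ S.card := by
    by_contra hc
    push Not at hc
    nlinarith
  have h1 : (P : ℝ) * P ≤ T ^ 2 * (S.card * S.card) := by
    calc (P : ℝ) * P ≤ (T * S.card) * (T * S.card) := by gcongr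
      _ = _ := by ring
  have h2 : (S.card : ℝ) * S.card ≤ 4 * W := by nlinarith
  have h3 : (P : ℝ) * P ≤ 4 * T ^ 2 * (B.card * P + P * (P / T ^ 3)) := by
    calc (P : ℝ) * P ≤ T ^ 2 * (4 * W) := h1.trans (by gcongr)
      _ = 4 * T ^ 2 * W := by ring
      _ ≤ _ := by gcongr; linarith
  have h4 : (P : ℝ) ≤ 4 * T ^ 2 * B.card + 4 * P / T := by
    have : 4 * T ^ 2 * (B.card * P + P * (P / T ^ 3)) = (4 * T ^ 2 * B.card + 4 * P / T) * P := by
      field_simp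
    rw [this] at h3
    exact le_of_mul_le_mul_right h3 hP0
  have h5 : 4 * P / T ≤ (P : ℝ) / 2 := by
    rw [div_le_div_iff₀ hT0 (by norm_num)]
    nlinarith
  have h6 : (P : ℝ) ≤ 8 * T ^ 2 * B.card := by linarith
  calc (P : ℝ) ≤ 8 * T ^ 2 * B.card := h6
    _ ≤ T * T ^ 2 * B.card := by gcongr
    _ = _ := by ring

/-- Inverse theorem with polynomial losses: if a polynomial-like `f` of degree `k` is within `η` of
an integer on a proportion `1 / T` of `{1, …, P}`, then some multiple
`q c` with `1 ≤ q ≤ T ^ C` is within `T ^ C η / P ^ k` of an integer. Induction on `k`: passing to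
`f (· + h) - f` for the many popular differences `h` of the set, then applying `linear_inverse`. -/
theorem poly_inverse (k : ℕ) : ∃ C : ℕ, ∀ (T : ℝ) (P : ℕ) (f : ℕ → ℝ) (c η : ℝ) (S : Finset ℕ),
    8 ≤ T → 0 ≤ η → IsPolyLike k c f → S ⊆ Finset.Icc 1 P → (P : ℝ) ≤ T * S.card →
    T ^ C ≤ P → η * T ^ C ≤ 1 → (∀ m ∈ S, NearInt (f m) η) →
    ∃ q : ℕ, 1 ≤ q ∧ (q : ℝ) ≤ T ^ C ∧ NearInt (q * c) (T ^ C * η / (P : ℝ) ^ k) := by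
  induction k with
  | zero =>
    refine ⟨0, fun T P f c η S hT hη hf hS hcard hP _ hn => ⟨1, le_rfl, by simp, ?_⟩⟩
    have : S.Nonempty := by
      rw [Finset.nonempty_iff_ne_empty]
      rintro rfl
      simp at hcard hP
      rw [hcard] at hP
      norm_num at hP
    obtain ⟨m, hm⟩ := this
    have h1 := hn m hm
    rw [hf m] at h1
    simpa using h1
  | succ k ih =>
    obtain ⟨C, hC⟩ := ih
    refine ⟨16 + 18 * C, fun T P f c η S hT hη hf hS hcard hP hηT hn => ?_⟩
    classical
    have hT0 : 0 < T := by linarith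
    have hT1 : 1 ≤ T := by linarith
    have hmono : ∀ a b : ℕ, a ≤ b → T ^ a ≤ T ^ b := fun a b h => pow_le_pow_right₀ hT1 h
    have hP0 : (0 : ℝ) < P := lt_of_lt_of_le (by positivity) hP
    have hP1 : (1 : ℝ) ≤ P := (one_le_pow₀ hT1).trans hP
    have hηm : ∀ a : ℕ, a ≤ 16 + 18 * C → η * T ^ a ≤ 1 := fun a h =>
      le_trans (by gcongr) hηT
    have hP2 : 2 * T ≤ P := by
      calc 2 * T ≤ T * T := by gcongr; linarith
        _ = T ^ 2 := by ring
        _ ≤ T ^ (16 + 18 * C) := hmono _ _ (by omega)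
        _ ≤ P := hP
    have hpop := popular_differences T hT P S hS hcard hP2
    set B := (Finset.Icc 1 P).filter fun h =>
      (P : ℝ) ≤ T ^ 3 * (S.filter fun m => m + h ∈ S).card with hB
    have hstep : ∀ h ∈ B, ∃ q : ℕ, 1 ≤ q ∧ (q : ℝ) ≤ T ^ (3 * C) ∧
        NearInt (q * (h * c)) (T ^ (3 * C) * (2 * η) / (P : ℝ) ^ k) := by
      intro h hh
      have hh2 := (Finset.mem_filter.1 hh).2
      rw [pow_mul]
      apply hC (T ^ 3) P (fun m => f (m + h) - f m) (h * c) (2 * η)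
        (S.filter fun m => m + h ∈ S) ?_ (by positivity) (hf h)
        ((Finset.filter_subset _ _).trans hS) hh2
      · rw [← pow_mul]; exact (hmono _ _ (by omega)).trans hP
      · rw [← pow_mul]
        calc 2 * η * T ^ (3 * C) ≤ T * η * T ^ (3 * C) := by gcongr; linarith
          _ = η * T ^ (3 * C + 1) := by ring
          _ ≤ 1 := hηm _ (by omega)
      · intro m hm
        rw [Finset.mem_filter] at hm
        obtain ⟨a, ha⟩ := hn m hm.1
        obtain ⟨b, hb⟩ := hn _ hm.2
        refine ⟨b - a, ?_⟩
        push_cast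
        rw [show f (m + h) - f m - (b - a) = (f (m + h) - b) - (f m - a) by ring]
        linarith [abs_sub (f (m + h) - b) (f m - a)]
      · calc (8 : ℝ) ≤ T := hT
          _ = T ^ 1 := by ring
          _ ≤ T ^ 3 := hmono _ _ (by omega)
    choose! Q hQ1 hQ2 hQ3 using hstep
    -- The multiplier `Q h` depends on `h`; restrict to its most popular value `q`.
    set N : ℕ := ⌊T ^ (3 * C)⌋₊ with hN
    have hN1 : (N : ℝ) ≤ T ^ (3 * C) := Nat.floor_le (by positivity)
    have hN0 : 0 < N := by rw [hN, Nat.floor_pos]; exact one_le_pow₀ hT1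
    have hN0R : (0 : ℝ) < N := by exact_mod_cast hN0
    obtain ⟨q, hq, hqc⟩ := Finset.exists_le_card_fiber_of_nsmul_le_card_of_maps_to
      (s := B) (t := Finset.Icc 1 N) (f := Q) (b := (B.card : ℝ) / N)
      (by
        intro h hh
        exact Finset.mem_Icc.2 ⟨hQ1 h hh, Nat.le_floor (hQ2 h hh)⟩)
      (by simp; omega)
      (by rw [Nat.card_Icc, nsmul_eq_mul]; simp; field_simp; rfl)
    rw [Finset.mem_Icc] at hq
    set H := B.filter fun h => Q h = q with hH
    have hcH : (P : ℝ) ≤ T ^ (3 + 3 * C) * H.card := by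
      have h1 : (B.card : ℝ) ≤ T ^ (3 * C) * H.card := by
        rw [div_le_iff₀ hN0R] at hqc
        calc (B.card : ℝ) ≤ H.card * N := hqc
          _ ≤ H.card * T ^ (3 * C) := by gcongr
          _ = _ := by ring
      calc (P : ℝ) ≤ T ^ 3 * B.card := hpop
        _ ≤ T ^ 3 * (T ^ (3 * C) * H.card) := by gcongr
        _ = _ := by ring
    set η2 : ℝ := T ^ (3 * C) * (2 * η) / (P : ℝ) ^ k with hη2
    have hη2' : η2 ≤ T ^ (3 * C + 1) * η := by
      rw [hη2]
      calc T ^ (3 * C) * (2 * η) / (P : ℝ) ^ k ≤ T ^ (3 * C) * (2 * η) :=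
            div_le_self (by positivity) (one_le_pow₀ hP1)
        _ ≤ T ^ (3 * C) * (T * η) := by gcongr; linarith
        _ = _ := by ring
    obtain ⟨q0, hq01, hq02, hq03⟩ := linear_inverse (T ^ (3 + 3 * C)) (by
        calc (8 : ℝ) ≤ T := hT
          _ = T ^ 1 := by ring
          _ ≤ T ^ (3 + 3 * C) := hmono _ _ (by omega)) P H (q * c) η2 (by positivity)
      ((Finset.filter_subset _ _).trans (Finset.filter_subset _ _)) hcH
      (by rw [← pow_mul]; exact (hmono _ _ (by omega)).trans hP)
      (by
        rw [← pow_mul]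
        calc η2 * T ^ ((3 + 3 * C) * 5) ≤ (T ^ (3 * C + 1) * η) * T ^ ((3 + 3 * C) * 5) := by
              gcongr
          _ = η * T ^ (16 + 18 * C) := by ring
          _ ≤ 1 := hηT)
      (by
        intro h hh
        have hh' := Finset.mem_filter.1 hh
        have := hQ3 h hh'.1
        rw [hh'.2] at this
        rw [show (h : ℝ) * (q * c) = q * (h * c) by ring]
        exact this)
    refine ⟨q0 * q, Nat.mul_pos hq01 hq.1, ?_, ?_⟩
    · push_cast
      calc (q0 : ℝ) * q ≤ (T ^ (3 + 3 * C)) ^ 5 * T ^ (3 * C) := by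
            gcongr
            exact le_trans (by exact_mod_cast hq.2) hN1
        _ = T ^ (15 + 18 * C) := by ring
        _ ≤ _ := hmono _ _ (by omega)
    · obtain ⟨z, hz⟩ := hq03
      refine ⟨z, ?_⟩
      push_cast
      rw [mul_assoc]
      refine hz.trans ?_
      rw [hη2]
      have : (T ^ (3 + 3 * C)) ^ 5 * (T ^ (3 * C) * (2 * η) / (P : ℝ) ^ k) / P =
          (2 * T ^ (15 + 18 * C) * η) / (P : ℝ) ^ (k + 1) := by
        rw [pow_succ (P : ℝ) k]
        field_simp
        ring
      rw [this]
      gcongr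
      calc 2 * T ^ (15 + 18 * C) ≤ T * T ^ (15 + 18 * C) := by gcongr; linarith
        _ = _ := by ring

/-! ### Values of `p ^ k α` at primes -/

/-- A consequence of Chebyshev's lower bound: `π(P / 2) ≥ 2 P ^ (1 - u)` for large `P`. -/
lemma primes_many (u : ℝ) (hu : 0 < u) :
    ∀ᶠ P : ℕ in atTop, 2 * (P : ℝ) ^ (1 - u) ≤ ((P / 2).primesLE.card : ℝ) := by
  have hlog : ∀ᶠ x : ℝ in atTop, Real.log x ≤ (1 / 40) * x ^ (u) := by
    have := (isLittleO_log_rpow_atTop hu).bound (show (0 : ℝ) < 1 / 40 by norm_num)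
    filter_upwards [this, eventually_ge_atTop 1] with x hx h1
    rw [Real.norm_of_nonneg (Real.log_nonneg h1), Real.norm_of_nonneg (by positivity)] at hx
    exact hx
  have hlog1 : ∀ᶠ x : ℝ in atTop, Real.log x ≤ (1 / 40) * x ^ (1 : ℝ) := by
    have := (isLittleO_log_rpow_atTop (show (0 : ℝ) < 1 by norm_num)).bound
      (show (0 : ℝ) < 1 / 40 by norm_num)
    filter_upwards [this, eventually_ge_atTop 1] with x hx h1
    rw [Real.norm_of_nonneg (Real.log_nonneg h1), Real.norm_of_nonneg (by positivity)] at hx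
    exact hx
  filter_upwards [tendsto_natCast_atTop_atTop.eventually hlog,
    tendsto_natCast_atTop_atTop.eventually hlog1, eventually_ge_atTop 20] with P h1 h2 h3
  rw [Nat.primesLE_card_eq_primeCounting]
  rw [Real.rpow_one] at h2
  have hP : (20 : ℝ) ≤ P := by exact_mod_cast h3
  set M := P / 2 with hM
  have hM1 : (P : ℝ) - 1 ≤ 2 * M := by
    have : P ≤ 2 * M + 1 := by omega
    have : (P : ℝ) ≤ 2 * M + 1 := by exact_mod_cast this
    linarith
  have hM2 : (2 : ℝ) ≤ M := by linarith
  have hM3 : (M : ℝ) ≤ P := by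
    have : M ≤ P := by omega
    exact_mod_cast this
  have hM4 : (M : ℝ) + 1 ≤ P := by
    have : M + 1 ≤ P := by omega
    exact_mod_cast this
  refine le_trans ?_ (Chebyshev.pi_ge M)
  have hl0 : 0 < Real.log M := Real.log_pos (by linarith)
  have hl1 : Real.log M ≤ 1 / 40 * (P : ℝ) ^ u :=
    (Real.log_le_log (by linarith) hM3).trans h1
  have hl2 : Real.log (M + 1) ≤ 1 / 40 * P := (Real.log_le_log (by linarith) hM4).trans h2
  rw [le_div_iff₀ hl0]
  have hp : (P : ℝ) ^ (1 - u) * (P : ℝ) ^ u = P := by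
    rw [← Real.rpow_add (by linarith)]; simp
  have h5 : 2 * (P : ℝ) ^ (1 - u) * Real.log M ≤ P / 20 := by
    calc 2 * (P : ℝ) ^ (1 - u) * Real.log M ≤ 2 * (P : ℝ) ^ (1 - u) * (1 / 40 * (P : ℝ) ^ u) := by
          gcongr
      _ = ((P : ℝ) ^ (1 - u) * (P : ℝ) ^ u) / 20 := by ring
      _ = _ := by rw [hp]
  have h6 : (0.5 : ℝ) ≤ Real.log 2 := by
    have := Real.log_two_gt_d9
    linarith
  nlinarith

lemma primesLE_mono {a b : ℕ} (h : a ≤ b) : a.primesLE ⊆ b.primesLE := by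
  intro p hp
  rw [Nat.mem_primesLE] at *
  exact ⟨hp.1.trans h, hp.2⟩

/-- At least half of the primes up to `N` exceed `π(N) / 2`. -/
lemma sum_prime_pow_ge (N r : ℕ) :
    ((N.primesLE.card : ℝ) / 2) ^ (r + 1) ≤ ∑ p ∈ N.primesLE, (p : ℝ) ^ r := by
  classical
  set c := N.primesLE.card with hc
  set M := c / 2 with hM
  have h1 : (N.primesLE.filter fun p => p ≤ M).card ≤ M := by
    have : (N.primesLE.filter fun p => p ≤ M) ⊆ Finset.Icc 1 M := by
      intro p hp
      rw [Finset.mem_filter, Nat.mem_primesLE] at hp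
      exact Finset.mem_Icc.2 ⟨hp.1.2.one_lt.le, hp.2⟩
    simpa using Finset.card_le_card this
  have h2 := Finset.card_filter_add_card_filter_not (s := N.primesLE) (fun p => p ≤ M)
  have h3 : (c : ℝ) / 2 ≤ (N.primesLE.filter fun p => ¬ p ≤ M).card := by
    have : c ≤ 2 * (N.primesLE.filter fun p => ¬ p ≤ M).card := by omega
    have : (c : ℝ) ≤ 2 * (N.primesLE.filter fun p => ¬ p ≤ M).card := by exact_mod_cast this
    linarith
  calc ((c : ℝ) / 2) ^ (r + 1) = (c : ℝ) / 2 * ((c : ℝ) / 2) ^ r := by ring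
    _ ≤ (N.primesLE.filter fun p => ¬ p ≤ M).card * ((c : ℝ) / 2) ^ r := by gcongr
    _ = ∑ p ∈ N.primesLE.filter (fun p => ¬ p ≤ M), ((c : ℝ) / 2) ^ r := by
        rw [Finset.sum_const, nsmul_eq_mul]
    _ ≤ ∑ p ∈ N.primesLE.filter (fun p => ¬ p ≤ M), (p : ℝ) ^ r := by
        apply Finset.sum_le_sum
        intro p hp
        have := (Finset.mem_filter.1 hp).2
        have : c ≤ 2 * p := by omega
        have : (c : ℝ) ≤ 2 * p := by exact_mod_cast this
        gcongr
        linarith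
    _ ≤ _ := Finset.sum_le_sum_of_subset_of_nonneg (Finset.filter_subset _ _)
        (fun _ _ _ => by positivity)

/-- If `x` is at distance at least `d` from every integer, then `1 - cos 2πx ≥ 8 d²`. -/
lemma one_sub_cos_ge (x d : ℝ) (hd : 0 ≤ d) (h : ∀ z : ℤ, d ≤ |x - z|) :
    8 * d ^ 2 ≤ 1 - Real.cos (2 * Real.pi * x) := by
  have hw := abs_sub_round x
  set w := x - round x with hwdef
  have hcos : Real.cos (2 * Real.pi * x) = Real.cos (2 * Real.pi * w) := by
    rw [hwdef, mul_sub, show 2 * Real.pi * x - 2 * Real.pi * (round x : ℝ) =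
      2 * Real.pi * x - (round x : ℤ) * (2 * Real.pi) by ring, Real.cos_sub_int_mul_two_pi]
  have hpi := Real.pi_pos
  have h1 := Real.cos_le_one_sub_mul_cos_sq (x := 2 * Real.pi * w) (by
    rw [abs_mul, abs_of_pos (by positivity)]; nlinarith)
  have h2 : 2 / Real.pi ^ 2 * (2 * Real.pi * w) ^ 2 = 8 * w ^ 2 := by field_simp; ring
  rw [h2] at h1
  have h3 : d ^ 2 ≤ w ^ 2 := by
    rw [← sq_abs w]
    gcongr
    exact h (round x)
  rw [hcos]; linarith

set_option maxHeartbeats 1000000 in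
/-- Away from `0`, the `p ^ k α` with `p ≤ P` prime cannot nearly all be close to integers. If they
were, `poly_inverse` would make `α` very close to a fraction with small denominator: the fraction `0`
gives the second term of the minimum, and for a fraction `a / Q` outside `ℤ` no `p ^ k a / Q` with
`p > Q` is an integer, so that each contributes at least `Q⁻²`. The primes enter only through
Chebyshev's lower bound for their number. -/
theorem minor_arc (k : ℕ) (hk : 1 ≤ k) (ε : ℝ) (hε : 0 < ε) :
    ∀ᶠ P : ℕ in atTop, ∀ α : ℝ, |α| ≤ 1 / 2 →
      min ((P : ℝ) ^ (1 / 2 : ℝ)) (α ^ 2 * (P : ℝ) ^ ((2 * k + 1) * (1 - ε))) ≤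
        ∑ p ∈ P.primesLE, (1 - Real.cos (2 * Real.pi * ((p : ℝ) ^ k * α))) := by
  obtain ⟨C, hC⟩ := poly_inverse k
  -- `T = P ^ u` with `u` so small that `T ^ C` and the denominators are at most `P ^ (1 / 10)`.
  set u : ℝ := 1 / (10 * (C + 1)) with hu
  have hu0 : 0 < u := by positivity
  have huC : u * C + u = 1 / 10 := by rw [hu]; field_simp
  have huC0 : 0 ≤ u * C := by positivity
  have htend : Tendsto (fun P : ℕ => (P : ℝ) ^ u) atTop atTop :=
    (tendsto_rpow_atTop hu0).comp tendsto_natCast_atTop_atTop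
  filter_upwards [primes_many u hu0, primes_many ε hε, htend.eventually_ge_atTop 8,
    htend.eventually_ge_atTop (k.factorial : ℝ), eventually_ge_atTop 3] with P hp1 hp2 hT hfac hP3 α hα
  by_contra hcon
  push Not at hcon
  obtain ⟨hV1, hV2⟩ := lt_min_iff.1 hcon
  clear hcon
  classical
  have hP3R : (3 : ℝ) ≤ P := by exact_mod_cast hP3
  have hP0 : (0 : ℝ) < P := by linarith
  have hP1 : (1 : ℝ) ≤ P := by linarith
  set T : ℝ := (P : ℝ) ^ u with hTdef
  have hT0 : 0 < T := by linarith
  have hTC : T ^ C = (P : ℝ) ^ (u * C) := by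
    rw [hTdef, Real.rpow_mul hP0.le, Real.rpow_natCast]
  have hnn : ∀ p : ℕ, 0 ≤ 1 - Real.cos (2 * Real.pi * ((p : ℝ) ^ k * α)) := fun p => by
    linarith [Real.cos_le_one (2 * Real.pi * ((p : ℝ) ^ k * α))]
  set η : ℝ := (T ^ C)⁻¹ with hη
  have hη0 : 0 < η := by positivity
  have hηP : η ^ 2 = (P : ℝ) ^ (-(2 * (u * C))) := by
    rw [hη, hTC, ← Real.rpow_neg hP0.le, ← Real.rpow_natCast, ← Real.rpow_mul hP0.le]
    congr 1; push_cast; ring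
  -- The primes with `p ^ k α` within `η` of an integer have density at least `1 / T`.
  set S := P.primesLE.filter fun p : ℕ => NearInt ((p : ℝ) ^ k * α) η with hS
  set S' := P.primesLE.filter fun p : ℕ => ¬ NearInt ((p : ℝ) ^ k * α) η with hS'
  have hbad : (S'.card : ℝ) * η ^ 2 ≤ (P : ℝ) ^ (1 / 2 : ℝ) := by
    calc (S'.card : ℝ) * η ^ 2 = ∑ p ∈ S', η ^ 2 := by rw [Finset.sum_const, nsmul_eq_mul]
      _ ≤ ∑ p ∈ S', (1 - Real.cos (2 * Real.pi * ((p : ℝ) ^ k * α))) := by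
          apply Finset.sum_le_sum
          intro p hp
          have hp' := (Finset.mem_filter.1 hp).2
          have := one_sub_cos_ge ((p : ℝ) ^ k * α) η hη0.le (fun z => by
            by_contra hc
            push Not at hc
            exact hp' ⟨z, hc.le⟩)
          nlinarith [sq_nonneg η]
      _ ≤ ∑ p ∈ P.primesLE, (1 - Real.cos (2 * Real.pi * ((p : ℝ) ^ k * α))) :=
          Finset.sum_le_sum_of_subset_of_nonneg (Finset.filter_subset _ _) (fun p _ _ => hnn p)
      _ ≤ _ := hV1.le
  have hbad2 : (S'.card : ℝ) ≤ (P : ℝ) ^ (1 - u) := by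
    have : (S'.card : ℝ) ≤ (P : ℝ) ^ (1 / 2 : ℝ) / η ^ 2 := by
      rw [le_div_iff₀ (by positivity)]; exact hbad
    refine this.trans ?_
    rw [hηP, ← Real.rpow_sub hP0]
    apply Real.rpow_le_rpow_of_exponent_le hP1
    linarith
  have hcardS : (P : ℝ) ≤ T * S.card := by
    have h1 : (S.card : ℝ) + S'.card = P.primesLE.card := by
      have := Finset.card_filter_add_card_filter_not
        (s := P.primesLE) (fun p : ℕ => NearInt ((p : ℝ) ^ k * α) η)
      rw [← hS, ← hS'] at this
      rw [← this]; push_cast; rfl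
    have h2 : ((P / 2).primesLE.card : ℝ) ≤ P.primesLE.card := by
      exact_mod_cast Finset.card_le_card (primesLE_mono (Nat.div_le_self P 2))
    have h3 : (P : ℝ) ^ (1 - u) ≤ S.card := by linarith
    calc (P : ℝ) = T * (P : ℝ) ^ (1 - u) := by
          rw [hTdef, ← Real.rpow_add hP0]; simp
      _ ≤ _ := by gcongr
  obtain ⟨q, hq1, hq2, a, ha⟩ := hC T P (fun m => (m : ℝ) ^ k * α) (k.factorial * α) η S hT hη0.le
    (isPolyLike_pow k α) (by
      intro p hp
      have := (Nat.mem_primesLE.1 (Finset.mem_filter.1 hp).1)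
      exact Finset.mem_Icc.2 ⟨this.2.one_lt.le, this.1⟩) hcardS (by
      rw [hTC]
      calc (P : ℝ) ^ (u * C) ≤ (P : ℝ) ^ (1 : ℝ) :=
            Real.rpow_le_rpow_of_exponent_le hP1 (by linarith)
        _ = P := Real.rpow_one _) (by rw [hη, inv_mul_cancel₀ (by positivity)])
    (fun m hm => (Finset.mem_filter.1 hm).2)
  rw [hη, mul_inv_cancel₀ (by positivity)] at ha
  set Q : ℕ := q * k.factorial with hQ
  have hQ1 : 1 ≤ Q := Nat.mul_pos hq1 (Nat.factorial_pos k)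
  have hQ0 : (0 : ℝ) < Q := by exact_mod_cast hQ1
  have hQ2 : (Q : ℝ) ≤ (P : ℝ) ^ (u * C + u) := by
    rw [hQ, Real.rpow_add hP0, ← hTC]
    push_cast
    gcongr
  have ha' : |(Q : ℝ) * α - a| ≤ 1 / (P : ℝ) ^ k := by
    rw [hQ]; push_cast; rwa [mul_assoc]
  clear_value Q
  set β : ℝ := Q * α - a with hβ
  have hhalf : ∀ p ∈ (P / 2).primesLE, (p : ℝ) ^ k ≤ (P : ℝ) ^ k / 2 := by
    intro p hp
    have h1 := (Nat.mem_primesLE.1 hp).1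
    have h2 : 2 * p ≤ P := by omega
    have h2 : (2 : ℝ) * p ≤ P := by exact_mod_cast h2
    have h3 : ((2 : ℝ) * p) ^ k ≤ (P : ℝ) ^ k := by gcongr
    rw [mul_pow] at h3
    have h4 : (2 : ℝ) ≤ 2 ^ k := by
      calc (2 : ℝ) = 2 ^ 1 := by norm_num
        _ ≤ 2 ^ k := pow_le_pow_right₀ (by norm_num) hk
    have h5 : 0 ≤ (p : ℝ) ^ k := by positivity
    nlinarith
  by_cases hdvd : (Q : ℤ) ∣ a
  ·
    -- Here `α` is close to `0`, and `1 - cos` is at least of the size of `(p ^ k α)²`.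
    obtain ⟨b, rfl⟩ := hdvd
    have hαb : |α - b| ≤ 1 / (P : ℝ) ^ k := by
      have h1 : (Q : ℝ) * (α - b) = β := by rw [hβ]; push_cast; ring
      have h2 : (Q : ℝ) * |α - b| ≤ 1 / (P : ℝ) ^ k := by
        have h4 : |(Q : ℝ) * (α - b)| = Q * |α - b| := by rw [abs_mul, abs_of_pos hQ0]
        rw [← h4, h1]; exact ha'
      have h3 : (1 : ℝ) ≤ Q := by exact_mod_cast hQ1
      nlinarith [abs_nonneg (α - b)]
    have hPk : (P : ℝ) ≤ (P : ℝ) ^ k := by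
      calc (P : ℝ) = (P : ℝ) ^ 1 := by ring
        _ ≤ _ := pow_le_pow_right₀ hP1 hk
    have hb : b = 0 := by
      have h1 : 1 / (P : ℝ) ^ k ≤ 1 / 3 := by
        apply one_div_le_one_div_of_le (by norm_num); linarith
      have h2 : |(b : ℝ)| < 1 := by
        have := abs_sub_abs_le_abs_sub (b : ℝ) α
        rw [abs_sub_comm (b : ℝ)] at this
        linarith
      have : |b| < 1 := by exact_mod_cast h2
      exact Int.abs_lt_one_iff.1 this
    rw [hb] at hαb
    simp only [Int.cast_zero, sub_zero] at hαb
    have hlow : α ^ 2 * (P : ℝ) ^ ((2 * k + 1) * (1 - ε)) ≤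
        ∑ p ∈ P.primesLE, (1 - Real.cos (2 * Real.pi * ((p : ℝ) ^ k * α))) := by
      calc α ^ 2 * (P : ℝ) ^ ((2 * k + 1) * (1 - ε))
          = α ^ 2 * ((P : ℝ) ^ (1 - ε)) ^ (2 * k + 1) := by
            rw [← Real.rpow_natCast ((P : ℝ) ^ (1 - ε)), ← Real.rpow_mul hP0.le]
            congr 2
            push_cast; ring
        _ ≤ α ^ 2 * (((P / 2).primesLE.card : ℝ) / 2) ^ (2 * k + 1) := by
            gcongr
            linarith
        _ ≤ α ^ 2 * ∑ p ∈ (P / 2).primesLE, (p : ℝ) ^ (2 * k) := by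
            gcongr
            exact sum_prime_pow_ge _ _
        _ = ∑ p ∈ (P / 2).primesLE, α ^ 2 * (p : ℝ) ^ (2 * k) := by rw [Finset.mul_sum]
        _ ≤ ∑ p ∈ (P / 2).primesLE, (1 - Real.cos (2 * Real.pi * ((p : ℝ) ^ k * α))) := by
            apply Finset.sum_le_sum
            intro p hp
            have h1 := hhalf p hp
            have h2 : |(p : ℝ) ^ k * α| ≤ 1 / 2 := by
              rw [abs_mul, abs_of_nonneg (by positivity)]
              calc (p : ℝ) ^ k * |α| ≤ ((P : ℝ) ^ k / 2) * (1 / (P : ℝ) ^ k) := by gcongr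
                _ = 1 / 2 := by field_simp
            have h3 := one_sub_cos_ge ((p : ℝ) ^ k * α) |(p : ℝ) ^ k * α| (abs_nonneg _) (by
              intro z
              by_cases hz : z = 0
              · simp [hz]
              have hz1 : (1 : ℝ) ≤ |(z : ℝ)| := by
                exact_mod_cast Int.one_le_abs hz
              have := abs_sub_abs_le_abs_sub (z : ℝ) ((p : ℝ) ^ k * α)
              rw [abs_sub_comm (z : ℝ)] at this
              linarith)
            rw [sq_abs] at h3
            have h4 : 0 ≤ α ^ 2 * (p : ℝ) ^ (2 * k) := by positivity
            have h5 : ((p : ℝ) ^ k * α) ^ 2 = α ^ 2 * (p : ℝ) ^ (2 * k) := by ring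
            linarith
        _ ≤ _ := Finset.sum_le_sum_of_subset_of_nonneg (primesLE_mono (Nat.div_le_self P 2))
            (fun p _ _ => hnn p)
    linarith
  ·
    -- Here `α` is close to `a / Q`, which is not an integer.
    set R := (P / 2).primesLE.filter fun p => ¬ p ≤ Q with hR
    have hRc : (P : ℝ) ^ (1 - u) ≤ R.card := by
      have h1 : ((P / 2).primesLE.filter fun p => p ≤ Q).card ≤ Q := by
        have : ((P / 2).primesLE.filter fun p => p ≤ Q) ⊆ Finset.Icc 1 Q := by
          intro p hp
          rw [Finset.mem_filter, Nat.mem_primesLE] at hp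
          exact Finset.mem_Icc.2 ⟨hp.1.2.one_lt.le, hp.2⟩
        simpa using Finset.card_le_card this
      have h2 := Finset.card_filter_add_card_filter_not (s := (P / 2).primesLE) (fun p => p ≤ Q)
      rw [← hR] at h2
      have h3 : ((P / 2).primesLE.card : ℝ) ≤ Q + R.card := by
        have : (P / 2).primesLE.card ≤ Q + R.card := by omega
        exact_mod_cast this
      have h4 : (Q : ℝ) ≤ (P : ℝ) ^ (1 - u) :=
        hQ2.trans (Real.rpow_le_rpow_of_exponent_le hP1 (by linarith))
      linarith
    have hlow : (P : ℝ) ^ (1 / 2 : ℝ) ≤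
        ∑ p ∈ P.primesLE, (1 - Real.cos (2 * Real.pi * ((p : ℝ) ^ k * α))) := by
      calc (P : ℝ) ^ (1 / 2 : ℝ) ≤ (P : ℝ) ^ (1 - u - 2 * (u * C + u)) :=
            Real.rpow_le_rpow_of_exponent_le hP1 (by linarith)
        _ = (P : ℝ) ^ (1 - u) * (1 / ((P : ℝ) ^ (u * C + u)) ^ 2) := by
            rw [Real.rpow_sub hP0 (1 - u), ← Real.rpow_natCast ((P : ℝ) ^ (u * C + u)),
              ← Real.rpow_mul hP0.le, div_eq_mul_one_div]
            congr 3
            push_cast; ring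
        _ ≤ R.card * (1 / (Q : ℝ) ^ 2) := by gcongr
        _ = ∑ p ∈ R, 1 / (Q : ℝ) ^ 2 := by rw [Finset.sum_const, nsmul_eq_mul]
        _ ≤ ∑ p ∈ R, (1 - Real.cos (2 * Real.pi * ((p : ℝ) ^ k * α))) := by
            apply Finset.sum_le_sum
            intro p hp
            obtain ⟨hp1, hp2⟩ := Finset.mem_filter.1 hp
            have hprime := (Nat.mem_primesLE.1 hp1).2
            have h1 := hhalf p hp1
            have h3 := one_sub_cos_ge ((p : ℝ) ^ k * α) (1 / (2 * Q)) (by positivity) (by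
              intro z
              have hne : (p : ℤ) ^ k * a - z * Q ≠ 0 := by
                intro h0
                apply hdvd
                have h2 : (Q : ℤ) ∣ (p : ℤ) ^ k * a := ⟨z, by linarith⟩
                have hcop : Nat.Coprime Q (p ^ k) := by
                  apply Nat.Coprime.pow_right
                  apply Nat.Coprime.symm
                  rw [Nat.Prime.coprime_iff_not_dvd hprime]
                  intro hd
                  exact hp2 (Nat.le_of_dvd hQ1 hd)
                have hcop' : IsCoprime (Q : ℤ) ((p : ℤ) ^ k) := by
                  exact_mod_cast Nat.isCoprime_iff_coprime.2 hcop
                exact hcop'.dvd_of_dvd_mul_left h2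
              have h4 : (1 : ℝ) ≤ |(p : ℝ) ^ k * a - z * Q| := by
                exact_mod_cast Int.one_le_abs hne
              have h5 : |(p : ℝ) ^ k * β| ≤ 1 / 2 := by
                rw [abs_mul, abs_of_nonneg (by positivity)]
                calc (p : ℝ) ^ k * |β| ≤ ((P : ℝ) ^ k / 2) * (1 / (P : ℝ) ^ k) := by gcongr
                  _ = 1 / 2 := by field_simp
              have h6 : (Q : ℝ) * ((p : ℝ) ^ k * α - z) =
                  ((p : ℝ) ^ k * a - z * Q) + (p : ℝ) ^ k * β := by rw [hβ]; ring
              have h7 : 1 / 2 ≤ Q * |(p : ℝ) ^ k * α - z| := by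
                have h8 : |(Q : ℝ) * ((p : ℝ) ^ k * α - z)| = Q * |(p : ℝ) ^ k * α - z| := by
                  rw [abs_mul, abs_of_pos hQ0]
                rw [← h8, h6]
                have := abs_sub_abs_le_abs_sub ((p : ℝ) ^ k * a - z * Q) (-((p : ℝ) ^ k * β))
                rw [abs_neg, sub_neg_eq_add] at this
                linarith
              rw [div_le_iff₀ (by positivity)]
              linarith)
            have h8 : 8 * (1 / (2 * (Q : ℝ))) ^ 2 = 2 * (1 / (Q : ℝ) ^ 2) := by
              field_simp; norm_num
            have h9 : 0 < 1 / (Q : ℝ) ^ 2 := by positivity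
            linarith
        _ ≤ _ := Finset.sum_le_sum_of_subset_of_nonneg
            ((Finset.filter_subset _ _).trans (primesLE_mono (Nat.div_le_self P 2)))
            (fun p _ _ => hnn p)
    linarith

/-! ### Size of the sums `Φ_{(m)}` -/

/-- The exponent `j p^k` of the term of `Φ` with index `(j, p)`. -/
def lam (k : ℕ) (i : ℕ+ × Nat.Primes) : ℕ := (i.1 : ℕ) * (i.2 : ℕ) ^ k

/-- The term `ρ^{j p^k} / j` of `Φ(ρ)` with index `(j, p)`. -/
noncomputable def wgt (k : ℕ) (ρ : ℝ) (i : ℕ+ × Nat.Primes) : ℝ := ρ ^ lam k i / ((i.1 : ℕ) : ℝ)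

lemma lam_pos (k : ℕ) (i : ℕ+ × Nat.Primes) : 0 < lam k i :=
  Nat.mul_pos i.1.pos (pow_pos i.2.2.pos _)

lemma wgt_nonneg (k : ℕ) {ρ : ℝ} (h : 0 ≤ ρ) (i : ℕ+ × Nat.Primes) : 0 ≤ wgt k ρ i := by
  unfold wgt; positivity

lemma wgt_mul_lam_pow (k m : ℕ) (ρ : ℝ) (i : ℕ+ × Nat.Primes) :
    ((i.1 : ℕ+) : ℝ) ^ ((m : ℤ) - 1) * ((i.2 : ℕ) : ℝ) ^ (k * m) *
      ρ ^ ((i.1 : ℕ) * (i.2 : ℕ) ^ k) = wgt k ρ i * (lam k i : ℝ) ^ m := by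
  have hj : ((i.1 : ℕ) : ℝ) ≠ 0 := by exact_mod_cast i.1.ne_zero
  unfold wgt lam
  push_cast
  rw [zpow_sub_one₀ hj, zpow_natCast, mul_pow, pow_mul]
  field_simp

/-- `t^σ e^{-t}` is bounded on `t > 0`. -/
lemma rpow_le_exp (σ : ℝ) (hσ : 0 ≤ σ) : ∃ K : ℝ, 0 < K ∧ ∀ t : ℝ, 0 < t →
    t ^ σ * Real.exp (-t) ≤ K := by
  refine ⟨1 + (⌈σ⌉₊.factorial : ℝ), by positivity, fun t ht => ?_⟩
  rw [Real.exp_neg, ← div_eq_mul_inv, div_le_iff₀ (Real.exp_pos _)]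
  have h1 := Real.pow_div_factorial_le_exp t ht.le ⌈σ⌉₊
  rw [div_le_iff₀ (by positivity)] at h1
  have h2 : 1 ≤ Real.exp t := Real.one_le_exp ht.le
  have h3 : t ^ σ ≤ 1 + t ^ ⌈σ⌉₊ := by
    rcases le_total t 1 with h | h
    · have := Real.rpow_le_one ht.le h hσ
      have : 0 ≤ t ^ ⌈σ⌉₊ := by positivity
      linarith
    · have := Real.rpow_le_rpow_of_exponent_le h (Nat.le_ceil σ)
      rw [Real.rpow_natCast] at this
      linarith
  linarith

lemma exp_pow_lam (X : ℝ) (l : ℕ) : Real.exp (-1 / X) ^ l = Real.exp (-(l / X)) := by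
  rw [← Real.exp_nat_mul]; congr 1; ring

/-- The bound `wgt · λ^m ≪ X^{m+s} λ^{-s} / j` at `ρ = e^{-1/X}`, from `(λ/X)^{m+s} e^{-λ/X} ≪ 1`
(Rankin's trick). -/
lemma wgt_lam_le (k m : ℕ) (s : ℝ) (hs : 0 ≤ s) : ∃ K : ℝ, 0 < K ∧ ∀ X : ℝ, 0 < X →
    ∀ i, wgt k (Real.exp (-1 / X)) i * (lam k i : ℝ) ^ m ≤
      K * X ^ (m + s) * ((lam k i : ℝ) ^ (-s) / ((i.1 : ℕ) : ℝ)) := by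
  obtain ⟨K, hK, h⟩ := rpow_le_exp (m + s) (by positivity)
  refine ⟨K, hK, fun X hX i => ?_⟩
  have hl : (0 : ℝ) < lam k i := by exact_mod_cast lam_pos k i
  have h1 := h (lam k i / X) (by positivity)
  unfold wgt
  rw [exp_pow_lam]
  have h2 : (lam k i : ℝ) ^ m = (lam k i / X) ^ ((m : ℝ) + s) * X ^ ((m : ℝ) + s) *
      (lam k i : ℝ) ^ (-s) := by
    rw [Real.div_rpow hl.le hX.le, div_mul_cancel₀ _ (by positivity), ← Real.rpow_add hl,
      ← Real.rpow_natCast]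
    congr 1; ring
  rw [h2]
  have h3 : 0 ≤ X ^ ((m : ℝ) + s) * ((lam k i : ℝ) ^ (-s) / ((i.1 : ℕ) : ℝ)) := by positivity
  calc _ = ((lam k i / X) ^ ((m : ℝ) + s) * Real.exp (-(lam k i / X))) *
        (X ^ ((m : ℝ) + s) * ((lam k i : ℝ) ^ (-s) / ((i.1 : ℕ) : ℝ))) := by ring
    _ ≤ K * (X ^ ((m : ℝ) + s) * ((lam k i : ℝ) ^ (-s) / ((i.1 : ℕ) : ℝ))) :=
        mul_le_mul_of_nonneg_right h1 h3
    _ = _ := by ring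

lemma summable_lam (k : ℕ) (hk : 1 ≤ k) (ε : ℝ) (hε : 0 < ε) :
    Summable fun i : ℕ+ × Nat.Primes =>
      (lam k i : ℝ) ^ (-(1 / (k : ℝ) + ε)) / ((i.1 : ℕ) : ℝ) := by
  have hk0 : (0 : ℝ) < k := by exact_mod_cast hk
  have h1 : Summable fun j : ℕ+ => ((j : ℕ) : ℝ) ^ (-(1 / (k : ℝ) + ε) - 1) := by
    have : Summable fun j : ℕ => (j : ℝ) ^ (-(1 / (k : ℝ) + ε) - 1) := by
      rw [Real.summable_nat_rpow]
      have : 0 < 1 / (k : ℝ) := by positivity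
      linarith
    exact this.comp_injective PNat.coe_injective
  have h2 : Summable fun p : Nat.Primes => ((p : ℕ) : ℝ) ^ (-(1 + k * ε)) := by
    rw [Nat.Primes.summable_rpow]
    have : 0 < k * ε := by positivity
    linarith
  refine (h1.mul_of_nonneg h2 (fun j => by positivity) (fun p => by positivity)).congr ?_
  rintro ⟨j, p⟩
  have hj : (0 : ℝ) < ((j : ℕ) : ℝ) := by exact_mod_cast j.pos
  have hp : (0 : ℝ) < ((p : ℕ) : ℝ) := by exact_mod_cast p.2.pos
  simp only [lam]
  push_cast
  rw [Real.mul_rpow hj.le (by positivity), ← Real.rpow_natCast, ← Real.rpow_mul hp.le,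
    Real.rpow_sub_one hj.ne']
  have : (k : ℝ) * -(1 / (k : ℝ) + ε) = -(1 + k * ε) := by field_simp
  rw [this]; ring

/-- Writing `ρ = e^{-1/X}` with `X = 1 / log (1/ρ)`. -/
lemma exp_neg_inv {ρ : ℝ} (h : ρ ∈ Set.Ioo (0 : ℝ) 1) :
    0 < 1 / Real.log (1 / ρ) ∧ Real.exp (-1 / (1 / Real.log (1 / ρ))) = ρ := by
  have h1 : Real.log (1 / ρ) = - Real.log ρ := by rw [one_div, Real.log_inv]
  have h2 := Real.log_neg h.1 h.2
  refine ⟨by rw [h1]; exact one_div_pos.2 (by linarith), ?_⟩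
  rw [div_div_eq_mul_div, div_one, h1, neg_one_mul, neg_neg, Real.exp_log h.1]

lemma summable_wgt (k m : ℕ) (hk : 1 ≤ k) {ρ : ℝ} (hρ : ρ ∈ Set.Ioo (0 : ℝ) 1) :
    Summable fun i => wgt k ρ i * (lam k i : ℝ) ^ m := by
  obtain ⟨hX, he⟩ := exp_neg_inv hρ
  obtain ⟨K, hK, h⟩ := wgt_lam_le k m (1 / k + 1) (by positivity)
  have h := h _ hX
  rw [he] at h
  refine Summable.of_nonneg_of_le (fun i => mul_nonneg (wgt_nonneg k hρ.1.le i) (by positivity)) h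
    ((summable_lam k hk 1 one_pos).mul_left _)

/-- `Φ_{(m)}(ρ)` as a single sum over pairs; the iterated sum defining `Phim` may be merged by
absolute convergence. -/
lemma Phim_eq_tsum (k m : ℕ) (hk : 1 ≤ k) {ρ : ℝ} (hρ : ρ ∈ Set.Ioo (0 : ℝ) 1) :
    Phim k m ρ = ∑' i, wgt k ρ i * (lam k i : ℝ) ^ m := by
  rw [(summable_wgt k m hk hρ).tsum_prod]
  unfold Phim
  refine tsum_congr fun j => tsum_congr fun p => wgt_mul_lam_pow k m ρ (j, p)

/-- The upper bound `Φ_{(m)}(e^{-1/X}) ≪ X^{m + 1/k + ε}`. -/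
lemma Phim_le (k m : ℕ) (hk : 1 ≤ k) (ε : ℝ) (hε : 0 < ε) : ∃ C : ℝ, 0 < C ∧ ∀ X : ℝ, 0 < X →
    Phim k m (Real.exp (-1 / X)) ≤ C * X ^ (m + (1 / (k : ℝ) + ε)) := by
  obtain ⟨K, hK, h⟩ := wgt_lam_le k m (1 / k + ε) (by positivity)
  have hS := summable_lam k hk ε hε
  refine ⟨K * (∑' i : ℕ+ × Nat.Primes,
      (lam k i : ℝ) ^ (-(1 / (k : ℝ) + ε)) / ((i.1 : ℕ) : ℝ)) + 1, ?_, fun X hX => ?_⟩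
  · have : 0 ≤ ∑' i : ℕ+ × Nat.Primes,
      (lam k i : ℝ) ^ (-(1 / (k : ℝ) + ε)) / ((i.1 : ℕ) : ℝ) := tsum_nonneg fun i => by positivity
    positivity
  have hρ : Real.exp (-1 / X) ∈ Set.Ioo (0 : ℝ) 1 := by
    refine ⟨Real.exp_pos _, ?_⟩
    rw [Real.exp_lt_one_iff]
    exact div_neg_of_neg_of_pos (by norm_num) hX
  rw [Phim_eq_tsum k m hk hρ]
  have h1 := Summable.tsum_le_tsum (h X hX) (summable_wgt k m hk hρ) (hS.mul_left _)
  rw [tsum_mul_left] at h1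
  have : 0 ≤ X ^ (m + (1 / (k : ℝ) + ε)) := by positivity
  nlinarith

/-- Restricting a sum over `(j, p)` to `j = 1` and `p ≤ P`, where `P^k ≤ X`. -/
lemma tsum_wgt_ge (k : ℕ) (X : ℝ) (hX : 0 < X) (h : ℕ → ℝ) (h0 : ∀ l, 0 ≤ h l)
    (hs : Summable fun i => wgt k (Real.exp (-1 / X)) i * h (lam k i))
    (P : ℕ) (hP : (P : ℝ) ^ k ≤ X) :
    Real.exp (-1) * ∑ p ∈ P.primesLE, h (p ^ k) ≤
      ∑' i, wgt k (Real.exp (-1 / X)) i * h (lam k i) := by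
  classical
  let e : {p // p ∈ P.primesLE} → ℕ+ × Nat.Primes :=
    fun p => (1, ⟨p.1, (Nat.mem_primesLE.1 p.2).2⟩)
  have he : Function.Injective e := by
    intro p q hpq
    have h2 : ((e p).2 : ℕ) = ((e q).2 : ℕ) := by rw [hpq]
    exact Subtype.ext h2
  have h1 := hs.sum_le_tsum (Finset.univ.map ⟨e, he⟩)
    (fun i _ => mul_nonneg (wgt_nonneg k (Real.exp_pos _).le i) (h0 _))
  rw [Finset.sum_map] at h1
  refine le_trans ?_ h1
  rw [Finset.mul_sum, ← Finset.sum_attach]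
  refine Finset.sum_le_sum fun p _ => ?_
  have : lam k (e p) = p.1 ^ k := by simp [lam, e]
  simp only [Function.Embedding.coeFn_mk, this]
  refine mul_le_mul_of_nonneg_right ?_ (h0 _)
  unfold wgt
  rw [this, exp_pow_lam]
  simp only [e, PNat.one_coe, Nat.cast_one, div_one, Real.exp_le_exp, neg_le_neg_iff]
  rw [div_le_one hX]
  push_cast
  refine le_trans ?_ hP
  have := (Nat.mem_primesLE.1 p.2).1
  gcongr

/-- The cut-off `P = ⌊X^{1/k}⌋` satisfies `P^k ≤ X` and `X^{1/k} ≤ 2P`. -/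
lemma floor_root (k : ℕ) (hk : 1 ≤ k) :
    Tendsto (fun X : ℝ => ⌊X ^ (1 / (k : ℝ))⌋₊) atTop atTop ∧
    ∀ᶠ X : ℝ in atTop, (⌊X ^ (1 / (k : ℝ))⌋₊ : ℝ) ^ k ≤ X ∧
      X ^ (1 / (k : ℝ)) / 2 ≤ (⌊X ^ (1 / (k : ℝ))⌋₊ : ℝ) := by
  have hk0 : (0 : ℝ) < k := by exact_mod_cast hk
  have ht : Tendsto (fun X : ℝ => X ^ (1 / (k : ℝ))) atTop atTop :=
    tendsto_rpow_atTop (by positivity)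
  refine ⟨tendsto_nat_floor_atTop.comp ht, ?_⟩
  filter_upwards [ht.eventually_ge_atTop 2, eventually_ge_atTop 0] with X h2 h0
  constructor
  · have := Nat.floor_le (show 0 ≤ X ^ (1 / (k : ℝ)) by positivity)
    calc _ ≤ (X ^ (1 / (k : ℝ))) ^ k := by gcongr
      _ = X := by
        rw [← Real.rpow_natCast, ← Real.rpow_mul h0, one_div_mul_cancel hk0.ne', Real.rpow_one]
  · have := Nat.lt_floor_add_one (X ^ (1 / (k : ℝ)))
    linarith

/-- The lower bound `Φ_{(2)}(e^{-1/X}) ≫ X^{(2 + 1/k)(1 - u)}`, from the primes `p ≤ X^{1/k}`. -/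
lemma Phim_two_ge (k : ℕ) (hk : 1 ≤ k) (u : ℝ) (hu : 0 < u) (hu1 : u < 1) :
    ∃ c : ℝ, 0 < c ∧ ∀ᶠ X : ℝ in atTop,
    c * X ^ ((2 + 1 / (k : ℝ)) * (1 - u)) ≤ Phim k 2 (Real.exp (-1 / X)) := by
  have hk0 : (0 : ℝ) < k := by exact_mod_cast hk
  obtain ⟨ht, hf⟩ := floor_root k hk
  refine ⟨Real.exp (-1) * ((1 / 2 : ℝ) ^ (1 - u)) ^ (2 * k + 1), by positivity, ?_⟩
  filter_upwards [hf, ht.eventually (primes_many u hu), eventually_gt_atTop 0]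
    with X ⟨h1, h2⟩ h3 hX
  set P := ⌊X ^ (1 / (k : ℝ))⌋₊
  have hρ : Real.exp (-1 / X) ∈ Set.Ioo (0 : ℝ) 1 := by
    refine ⟨Real.exp_pos _, ?_⟩
    rw [Real.exp_lt_one_iff]
    exact div_neg_of_neg_of_pos (by norm_num) hX
  rw [Phim_eq_tsum k 2 hk hρ]
  have h4 := tsum_wgt_ge k X hX (fun l => (l : ℝ) ^ 2) (fun l => by positivity)
    (summable_wgt k 2 hk hρ) P h1
  refine le_trans ?_ h4
  rw [mul_assoc]
  refine mul_le_mul_of_nonneg_left ?_ (Real.exp_pos _).le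
  have h5 := sum_prime_pow_ge P (2 * k)
  have h6 : (∑ p ∈ P.primesLE, (p : ℝ) ^ (2 * k)) =
      ∑ p ∈ P.primesLE, ((p ^ k : ℕ) : ℝ) ^ 2 := by
    refine Finset.sum_congr rfl fun p _ => ?_
    push_cast; rw [← pow_mul, mul_comm]
  rw [← h6]
  refine le_trans ?_ h5
  have h7 : ((P / 2).primesLE.card : ℝ) ≤ P.primesLE.card := by
    exact_mod_cast Finset.card_le_card (primesLE_mono (Nat.div_le_self _ _))
  have h8 : X ^ ((2 + 1 / (k : ℝ)) * (1 - u)) =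
      ((X ^ (1 / (k : ℝ))) ^ (1 - u)) ^ (2 * k + 1) := by
    rw [← Real.rpow_natCast, ← Real.rpow_mul hX.le, ← Real.rpow_mul hX.le]
    congr 1
    push_cast; field_simp
  rw [h8, ← mul_pow, ← Real.mul_rpow (by norm_num) (by positivity)]
  refine pow_le_pow_left₀ (by positivity) ?_ _
  have h9 : (1 / 2 * X ^ (1 / (k : ℝ))) ^ (1 - u) ≤ (P : ℝ) ^ (1 - u) :=
    Real.rpow_le_rpow (by positivity) (by linarith) (by linarith)
  linarith

/-! ### The generating function -/

/-- The sum of the `k`-th powers of the prime factors of `m`, with multiplicity. -/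
def wt (k m : ℕ) : ℕ := (m.primeFactorsList.map (· ^ k)).sum

lemma wt_mul (k : ℕ) {a b : ℕ} (ha : a ≠ 0) (hb : b ≠ 0) : wt k (a * b) = wt k a + wt k b := by
  unfold wt
  rw [((Nat.perm_primeFactorsList_mul ha hb).map _).sum_eq, List.map_append, List.sum_append]

lemma wt_prime (k : ℕ) {p : ℕ} (hp : p.Prime) : wt k p = p ^ k := by
  simp [wt, Nat.primeFactorsList_prime hp]

/-- The completely multiplicative function with value `z^{p^k}` at each prime `p`. -/
def wtHom (k : ℕ) (z : ℂ) : ℕ →*₀ ℂ where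
  toFun m := if m = 0 then 0 else z ^ wt k m
  map_zero' := by simp
  map_one' := by simp [wt]
  map_mul' a b := by
    by_cases ha : a = 0
    · simp [ha]
    by_cases hb : b = 0
    · simp [hb]
    simp [ha, hb, wt_mul k ha hb, pow_add]

lemma wtHom_apply (k : ℕ) (z : ℂ) {m : ℕ} (hm : m ≠ 0) : wtHom k z m = z ^ wt k m := by
  simp [wtHom, hm]

/-- Partitions of `n` into `k`-th powers of primes correspond to positive integers `m` of
weight `n` through unique factorisation. -/
lemma pPk_eq (k : ℕ) (hk : 1 ≤ k) (n : ℕ) :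
    pPk k n = Nat.card {m : {m : ℕ // m ≠ 0} // wt k m = n} ∧
      Finite {m : {m : ℕ // m ≠ 0} // wt k m = n} := by
  let F : {m : {m : ℕ // m ≠ 0} // wt k m = n} →
      {P : n.Partition // ∀ i ∈ P.parts, ∃ p : ℕ, p.Prime ∧ i = p ^ k} := fun m =>
    ⟨⟨((m.1.1.primeFactorsList : Multiset ℕ)).map (· ^ k), by
        intro i hi
        obtain ⟨p, hp, rfl⟩ := Multiset.mem_map.1 hi
        exact pow_pos (Nat.prime_of_mem_primeFactorsList (by simpa using hp)).pos _, by
        simpa [wt] using m.2⟩, by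
        intro i (hi : i ∈ ((m.1.1.primeFactorsList : Multiset ℕ)).map (· ^ k))
        obtain ⟨p, hp, rfl⟩ := Multiset.mem_map.1 hi
        exact ⟨p, Nat.prime_of_mem_primeFactorsList (by simpa using hp), rfl⟩⟩
  have hF : Function.Bijective F := by
    constructor
    · intro a b hab
      have h1 : ((a.1.1.primeFactorsList : Multiset ℕ)).map (· ^ k) =
          ((b.1.1.primeFactorsList : Multiset ℕ)).map (· ^ k) :=
        congrArg (fun Q => Q.1.parts) hab
      have h2 := Multiset.map_injective (Nat.pow_left_injective (by omega)) h1
      have h3 := congrArg Multiset.prod h2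
      simp only [Multiset.prod_coe, Nat.prod_primeFactorsList a.1.2,
        Nat.prod_primeFactorsList b.1.2] at h3
      exact Subtype.ext (Subtype.ext h3)
    · rintro ⟨P, hP⟩
      have key : ∀ s : Multiset ℕ, (∀ i ∈ s, ∃ p : ℕ, p.Prime ∧ i = p ^ k) →
          ∃ l : List ℕ, (∀ p ∈ l, p.Prime) ∧ (l : Multiset ℕ).map (· ^ k) = s := by
        intro s
        induction s using Multiset.induction with
        | empty => exact fun _ => ⟨[], by simp, by simp⟩
        | cons a s ih =>
          intro h
          obtain ⟨l, hl, hs⟩ := ih fun i hi => h i (Multiset.mem_cons_of_mem hi)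
          obtain ⟨p, hp, rfl⟩ := h a (Multiset.mem_cons_self _ _)
          refine ⟨p :: l, ?_, ?_⟩
          · intro q hq
            rcases List.mem_cons.1 hq with rfl | hq
            · exact hp
            · exact hl q hq
          · rw [← hs]; simp
      obtain ⟨l, hl, hs⟩ := key P.parts hP
      have h0 : l.prod ≠ 0 := List.prod_ne_zero fun h => Nat.not_prime_zero (hl 0 h)
      have hperm := Nat.primeFactorsList_unique rfl hl
      have hmul : ((l.prod.primeFactorsList : Multiset ℕ)).map (· ^ k) = P.parts := by
        rw [← hs]; congr 1; exact (Multiset.coe_eq_coe.2 hperm).symm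
      refine ⟨⟨⟨l.prod, h0⟩, ?_⟩, ?_⟩
      · have := congrArg Multiset.sum hmul
        rw [P.parts_sum] at this
        simpa [wt] using this
      · exact Subtype.ext (Nat.Partition.ext hmul)
  refine ⟨(Nat.card_eq_of_bijective F hF).symm, Finite.of_injective F hF.1⟩

/-- The partial sums up to `N` are dominated by the Euler product over primes `p ≤ N`, which is
bounded since `∑ ρ^p` converges. -/
lemma summable_wtHom (k : ℕ) (hk : 1 ≤ k) (z : ℂ) (hz : ‖z‖ < 1) :
    Summable fun m => ‖wtHom k z m‖ := by
  set ρ := ‖z‖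
  have hρ0 : 0 ≤ ρ := norm_nonneg z
  have hnorm : ∀ m, (‖wtHom k z m‖ : ℂ) = wtHom k (ρ : ℂ) m := by
    intro m
    by_cases hm : m = 0
    · simp [hm]
    · simp [wtHom_apply k _ hm, ρ]
  have hpk : ∀ p : ℕ, p.Prime → p ≤ p ^ k := fun p hp => Nat.le_self_pow (by omega) p
  have hlt : ∀ {p : ℕ}, p.Prime → ‖(wtHom k (ρ : ℂ) : ℕ →* ℂ) p‖ < 1 := by
    intro p hp
    have : (wtHom k (ρ : ℂ) : ℕ →* ℂ) p = (ρ : ℂ) ^ (p ^ k) := by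
      rw [MonoidHom.coe_coe, wtHom_apply k _ hp.ne_zero, wt_prime k hp]
    rw [this, norm_pow, Complex.norm_real, Real.norm_of_nonneg hρ0]
    exact pow_lt_one₀ hρ0 hz (pow_pos hp.pos _).ne'
  refine summable_of_sum_range_le (c := Real.exp (∑' p : ℕ, ρ ^ p / (1 - ρ)))
    (fun m => norm_nonneg _) fun N => ?_
  obtain ⟨hs, hS⟩ := EulerProduct.summable_and_hasSum_smoothNumbers_prod_primesBelow_geometric
    hlt (N + 1)
  have hre : HasSum (fun m : (N + 1).smoothNumbers => ‖wtHom k z m‖)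
      (∏ p ∈ (N + 1).primesBelow, (1 - ρ ^ (p ^ k))⁻¹) := by
    rw [← Complex.hasSum_ofReal]
    have e1 : (fun m : (N + 1).smoothNumbers => ((‖wtHom k z m‖ : ℝ) : ℂ)) =
        fun m : (N + 1).smoothNumbers => (wtHom k (ρ : ℂ) : ℕ →* ℂ) m := by
      funext m; exact hnorm m
    have e2 : ((∏ p ∈ (N + 1).primesBelow, (1 - ρ ^ (p ^ k))⁻¹ : ℝ) : ℂ) =
        ∏ p ∈ (N + 1).primesBelow, (1 - (wtHom k (ρ : ℂ) : ℕ →* ℂ) p)⁻¹ := by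
      push_cast
      refine Finset.prod_congr rfl fun p hp => ?_
      have hp' := Nat.prime_of_mem_primesBelow hp
      rw [MonoidHom.coe_coe, wtHom_apply k _ hp'.ne_zero, wt_prime k hp']
    rw [e1, e2]
    exact hS
  have h1 : ∑ m ∈ Finset.range N, ‖wtHom k z m‖ ≤
      ∏ p ∈ (N + 1).primesBelow, (1 - ρ ^ (p ^ k))⁻¹ := by
    classical
    have h2 : HasSum (((N + 1).smoothNumbers).indicator fun m => ‖wtHom k z m‖)
        (∏ p ∈ (N + 1).primesBelow, (1 - ρ ^ (p ^ k))⁻¹) :=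
      (hasSum_subtype_iff_indicator (s := (N + 1).smoothNumbers)).1 hre
    refine le_trans (Finset.sum_le_sum fun m hm => ?_)
      (sum_le_hasSum (Finset.range N) (fun m _ => Set.indicator_nonneg
        (fun _ _ => norm_nonneg _) _) h2)
    by_cases hm0 : m = 0
    · simp only [hm0, map_zero, norm_zero]
      exact Set.indicator_nonneg (fun _ _ => norm_nonneg _) _
    · rw [Set.indicator_of_mem]
      exact Nat.mem_smoothNumbers_of_lt (Nat.pos_of_ne_zero hm0)
        (by have := Finset.mem_range.1 hm; omega)
  refine h1.trans ?_
  have hr : 0 < 1 - ρ := by linarith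
  have hsum : Summable fun p : ℕ => ρ ^ p / (1 - ρ) :=
    (summable_geometric_of_lt_one hρ0 hz).div_const _
  calc _ ≤ ∏ p ∈ (N + 1).primesBelow, Real.exp (ρ ^ p / (1 - ρ)) := by
        refine Finset.prod_le_prod (fun p hp => ?_) fun p hp => ?_
        · have : ρ ^ (p ^ k) ≤ 1 := pow_le_one₀ hρ0 hz.le
          exact inv_nonneg.2 (by linarith)
        · have hp' := Nat.prime_of_mem_primesBelow hp
          set x := ρ ^ (p ^ k)
          have hx0 : 0 ≤ x := by positivity
          have hx1 : x ≤ ρ := pow_le_of_le_one hρ0 hz.le (pow_pos hp'.pos _).ne'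
          have hx2 : x ≤ ρ ^ p := pow_le_pow_of_le_one hρ0 hz.le (hpk p hp')
          have hx3 : 0 < 1 - x := by linarith
          have e1 : (1 - x)⁻¹ = x / (1 - x) + 1 := by field_simp; ring
          rw [e1]
          refine (Real.add_one_le_exp _).trans (Real.exp_le_exp.2 ?_)
          gcongr
    _ = Real.exp (∑ p ∈ (N + 1).primesBelow, ρ ^ p / (1 - ρ)) := (Real.exp_sum _ _).symm
    _ ≤ _ := Real.exp_le_exp.2 (hsum.sum_le_tsum _ fun p _ => by positivity)

/-- The terms of `Φ(z)` at a complex argument. -/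
noncomputable def cterm (k : ℕ) (z : ℂ) (i : ℕ+ × Nat.Primes) : ℂ :=
  z ^ lam k i / ((i.1 : ℕ) : ℂ)

lemma norm_cterm (k : ℕ) (z : ℂ) (i : ℕ+ × Nat.Primes) : ‖cterm k z i‖ = wgt k ‖z‖ i := by
  simp [cterm, wgt]

lemma summable_cterm (k : ℕ) (hk : 1 ≤ k) (z : ℂ) (hz0 : z ≠ 0) (hz : ‖z‖ < 1) :
    Summable (cterm k z) := by
  refine Summable.of_norm ?_
  simp only [norm_cterm]
  simpa using summable_wgt k 0 hk (ρ := ‖z‖) ⟨norm_pos_iff.2 hz0, hz⟩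

/-- The generating function of `pPk k` is `Ψ`. The Euler product of `wtHom k z` expresses
`∑ₘ z ^ wt k m` as `Ψ(z)`; grouping the `m` by weight gives the partition numbers. -/
lemma hasSum_pPk (k : ℕ) (hk : 1 ≤ k) (z : ℂ) (hz0 : z ≠ 0) (hz : ‖z‖ < 1) :
    HasSum (fun n => (pPk k n : ℂ) * z ^ n) (Complex.exp (∑' i, cterm k z i)) := by
  have hs := summable_wtHom k hk z hz
  have h1 := EulerProduct.exp_tsum_primes_log_eq_tsum hs
  have h2 : ∑' p : Nat.Primes, -Complex.log (1 - wtHom k z p) = ∑' i, cterm k z i := by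
    have h3 := summable_cterm k hk z hz0 hz
    have h3' : Summable fun q : Nat.Primes × ℕ+ => cterm k z (q.2, q.1) :=
      (Equiv.prodComm Nat.Primes ℕ+).summable_iff.2 h3
    have h3'' : ∑' i, cterm k z i = ∑' q : Nat.Primes × ℕ+, cterm k z (q.2, q.1) :=
      ((Equiv.prodComm Nat.Primes ℕ+).tsum_eq _).symm
    rw [h3'', h3'.tsum_prod]
    refine tsum_congr fun p => ?_
    rw [wtHom_apply k _ p.2.ne_zero, wt_prime k p.2]
    have h4 : ‖z ^ ((p : ℕ) ^ k)‖ < 1 := by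
      rw [norm_pow]
      exact pow_lt_one₀ (norm_nonneg _) hz (pow_pos p.2.pos _).ne'
    rw [← (Complex.hasSum_taylorSeries_neg_log' h4).tsum_eq,
      ← Equiv.pnatEquivNat.tsum_eq]
    refine tsum_congr fun j => ?_
    have : ((j : ℕ) : ℂ) = (j.natPred : ℂ) + 1 := by
      exact_mod_cast (PNat.natPred_add_one j).symm
    simp only [cterm, lam, Equiv.pnatEquivNat_apply,
      PNat.natPred_add_one, this]
    rw [mul_comm (j : ℕ), pow_mul]
  rw [h2] at h1
  have h5 : HasSum (fun m => wtHom k z m) (Complex.exp (∑' i, cterm k z i)) := by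
    rw [h1]; exact hs.of_norm.hasSum
  have h6 : HasSum (fun m : {m : ℕ // m ≠ 0} => wtHom k z m)
      (Complex.exp (∑' i, cterm k z i)) := by
    refine (hasSum_subtype_iff_of_support_subset (s := {m : ℕ | m ≠ 0}) ?_).2 h5
    intro m hm h0
    exact hm (by rw [h0, map_zero])
  have h7 := (Equiv.sigmaFiberEquiv (fun m : {m : ℕ // m ≠ 0} => wt k m)).hasSum_iff.2 h6
  refine h7.sigma fun n => ?_
  obtain ⟨e1, e2⟩ := pPk_eq k hk n
  have e3 : (fun c : {m : {m : ℕ // m ≠ 0} // wt k m = n} =>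
      ((fun m : {m : ℕ // m ≠ 0} => wtHom k z m) ∘
        (Equiv.sigmaFiberEquiv (fun m : {m : ℕ // m ≠ 0} => wt k m))) ⟨n, c⟩) =
      fun _ => z ^ n := by
    funext c
    simp only [Function.comp, Equiv.sigmaFiberEquiv_apply]
    rw [wtHom_apply k z c.1.2, c.2]
  rw [e3, e1]
  have := Fintype.ofFinite {m : {m : ℕ // m ≠ 0} // wt k m = n}
  have := hasSum_fintype fun _ : {m : {m : ℕ // m ≠ 0} // wt k m = n} => z ^ n
  simpa [Nat.card_eq_fintype_card] using this

/-! ### Cauchy's formula -/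

/-- The function `θ ↦ Ψ(ρ e^{iθ})` on the circle of radius `ρ`. -/
noncomputable def psiC (k : ℕ) (ρ θ : ℝ) : ℂ :=
  Complex.exp (∑' i, cterm k (ρ * Complex.exp (θ * Complex.I)) i)

lemma norm_rexp (ρ θ : ℝ) (h : 0 < ρ) : ‖(ρ : ℂ) * Complex.exp (θ * Complex.I)‖ = ρ := by
  rw [norm_mul, Complex.norm_exp_ofReal_mul_I, mul_one, Complex.norm_real,
    Real.norm_of_nonneg h.le]

lemma cterm_rexp (k : ℕ) (ρ θ : ℝ) (i : ℕ+ × Nat.Primes) :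
    cterm k (ρ * Complex.exp (θ * Complex.I)) i =
      (wgt k ρ i : ℂ) * Complex.exp ((lam k i : ℝ) * θ * Complex.I) := by
  unfold cterm wgt
  rw [mul_pow, ← Complex.exp_nat_mul]
  push_cast
  ring_nf

lemma continuous_psiC (k : ℕ) (hk : 1 ≤ k) {ρ : ℝ} (hρ : ρ ∈ Set.Ioo (0 : ℝ) 1) :
    Continuous (psiC k ρ) := by
  refine Complex.continuous_exp.comp ?_
  refine continuous_tsum (u := fun i => wgt k ρ i) (fun i => ?_)
    (by simpa using summable_wgt k 0 hk hρ) fun i θ => ?_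
  · unfold cterm; fun_prop
  · rw [norm_cterm, norm_rexp ρ θ hρ.1]

lemma integral_exp_int (d : ℤ) : ∫ θ in (-Real.pi)..Real.pi, Complex.exp (d * θ * Complex.I) =
    if d = 0 then (2 * Real.pi : ℂ) else 0 := by
  split_ifs with h
  · subst h; simp; ring
  · have hc : (d * Complex.I : ℂ) ≠ 0 := mul_ne_zero (by exact_mod_cast h) Complex.I_ne_zero
    have h1 := integral_exp_mul_complex (a := -Real.pi) (b := Real.pi) hc
    have h2 : ∀ θ : ℝ, (d * Complex.I * θ : ℂ) = d * θ * Complex.I := fun θ => by ring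
    simp only [h2] at h1
    rw [h1, div_eq_zero_iff]
    left
    rw [sub_eq_zero, Complex.exp_eq_exp_iff_exists_int]
    exact ⟨d, by push_cast; ring⟩

/-- Cauchy's formula: `pPk k n` as a Fourier coefficient of `θ ↦ Ψ(ρ e^{iθ})`. -/
lemma integral_psiC (k : ℕ) (hk : 1 ≤ k) {ρ : ℝ} (hρ : ρ ∈ Set.Ioo (0 : ℝ) 1) (n : ℕ) :
    ∫ θ in (-Real.pi)..Real.pi, psiC k ρ θ * Complex.exp (-(n * θ * Complex.I)) =
      2 * Real.pi * (pPk k n * ρ ^ n) := by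
  let f : ℕ → C(ℝ, ℂ) := fun m =>
    ⟨fun θ => (pPk k m : ℂ) * ρ ^ m * Complex.exp (((m - n : ℤ) : ℂ) * θ * Complex.I), by fun_prop⟩
  have hsum : Summable fun m => (pPk k m : ℝ) * ρ ^ m := by
    have h := (hasSum_pPk k hk (ρ : ℂ) (by exact_mod_cast hρ.1.ne')
      (by rw [Complex.norm_real, Real.norm_of_nonneg hρ.1.le]; exact hρ.2)).summable
    exact_mod_cast h
  have hn : Summable fun m => ‖(f m).restrict
      (⟨Set.uIcc (-Real.pi) Real.pi, isCompact_uIcc⟩ : TopologicalSpace.Compacts ℝ)‖ := by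
    refine Summable.of_nonneg_of_le (fun m => norm_nonneg _) (fun m => ?_) hsum
    rw [ContinuousMap.norm_le _ (by have := hρ.1; positivity)]
    intro θ
    have : (((m - n : ℤ) : ℂ) * (θ : ℝ) * Complex.I) = (((m - n : ℤ) : ℝ) * (θ : ℝ) : ℝ) * Complex.I := by
      push_cast; ring
    simp only [f, ContinuousMap.restrict_apply, ContinuousMap.coe_mk]
    rw [this, norm_mul, Complex.norm_exp_ofReal_mul_I, mul_one, norm_mul, norm_pow,
      Complex.norm_real, Real.norm_of_nonneg hρ.1.le, Complex.norm_natCast]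
  have h1 := intervalIntegral.hasSum_intervalIntegral_of_summable_norm (f := f) hn
  have h2 : ∀ θ : ℝ, ∑' m, f m θ = psiC k ρ θ * Complex.exp (-(n * θ * Complex.I)) := by
    intro θ
    have h3 := (hasSum_pPk k hk ((ρ : ℂ) * Complex.exp (θ * Complex.I))
      (mul_ne_zero (by exact_mod_cast hρ.1.ne') (Complex.exp_ne_zero _))
      (by rw [norm_rexp ρ θ hρ.1]; exact hρ.2)).mul_right (Complex.exp (-(n * θ * Complex.I)))
    rw [psiC, ← h3.tsum_eq]
    refine tsum_congr fun m => ?_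
    simp only [f, ContinuousMap.coe_mk]
    rw [mul_pow, ← Complex.exp_nat_mul]
    have : Complex.exp (((m - n : ℤ) : ℂ) * θ * Complex.I) =
        Complex.exp (m * (θ * Complex.I)) * Complex.exp (-(n * θ * Complex.I)) := by
      rw [← Complex.exp_add]; congr 1; push_cast; ring
    rw [this]; ring
  have h4 : ∀ m, ∫ θ in (-Real.pi)..Real.pi, f m θ =
      if m = n then 2 * Real.pi * (pPk k n * ρ ^ n : ℂ) else 0 := by
    intro m
    simp only [f, ContinuousMap.coe_mk]
    rw [intervalIntegral.integral_const_mul, integral_exp_int]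
    by_cases h : m = n
    · subst h; simp; ring
    · have : (m - n : ℤ) ≠ 0 := by omega
      simp [h, this]
  simp only [h2, h4] at h1
  exact h1.unique (hasSum_ite_eq n _)

/-- `S(θ) = ∑ w (e^{iλθ} - 1 - iλθ)` over the terms of `Φ(ρ)`, of weight `w` and exponent `λ`. It is
a logarithm of `Ψ(ρ e^{iθ}) e^{-inθ} / Ψ(ρ)` at the
saddle point. -/
noncomputable def sadS (k : ℕ) (ρ θ : ℝ) : ℂ :=
  ∑' i, (wgt k ρ i : ℂ) * (Complex.exp ((lam k i : ℝ) * θ * Complex.I) - 1 -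
    (lam k i : ℝ) * θ * Complex.I)

/-- At the saddle point `Φ_{(1)}(ρ) = n` the linear term of the exponent is absorbed. -/
lemma psiC_eq (k : ℕ) (hk : 1 ≤ k) {ρ : ℝ} (hρ : ρ ∈ Set.Ioo (0 : ℝ) 1) (n : ℕ)
    (hn : Phim k 1 ρ = n) (θ : ℝ) :
    psiC k ρ θ * Complex.exp (-(n * θ * Complex.I)) =
      Real.exp (Phim k 0 ρ) * Complex.exp (sadS k ρ θ) := by
  have h0 : HasSum (fun i => (wgt k ρ i : ℂ)) (Phim k 0 ρ : ℂ) := by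
    rw [Complex.hasSum_ofReal, Phim_eq_tsum k 0 hk hρ]
    simpa using (summable_wgt k 0 hk hρ).hasSum
  have h1 : HasSum (fun i => ((wgt k ρ i * (lam k i : ℝ) : ℝ) : ℂ)) (n : ℂ) := by
    rw [show (n : ℂ) = ((n : ℝ) : ℂ) by norm_cast, Complex.hasSum_ofReal, ← hn,
      Phim_eq_tsum k 1 hk hρ]
    simpa using (summable_wgt k 1 hk hρ).hasSum
  have h2 : HasSum (cterm k (ρ * Complex.exp (θ * Complex.I)))
      (∑' i, cterm k (ρ * Complex.exp (θ * Complex.I)) i) :=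
    (summable_cterm k hk _ (mul_ne_zero (by exact_mod_cast hρ.1.ne') (Complex.exp_ne_zero _))
      (by rw [norm_rexp ρ θ hρ.1]; exact hρ.2)).hasSum
  have h3 := (h2.sub h0).sub (h1.mul_right (θ * Complex.I))
  have h4 : sadS k ρ θ = ∑' i, cterm k (ρ * Complex.exp (θ * Complex.I)) i - (Phim k 0 ρ : ℂ) -
      n * (θ * Complex.I) := by
    rw [← h3.tsum_eq, sadS]
    refine tsum_congr fun i => ?_
    rw [cterm_rexp]; push_cast; ring
  rw [psiC, h4, Complex.ofReal_exp, ← Complex.exp_add, ← Complex.exp_add]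
  congr 1; ring

lemma continuous_sadS (k : ℕ) (hk : 1 ≤ k) {ρ : ℝ} (hρ : ρ ∈ Set.Ioo (0 : ℝ) 1) (n : ℕ)
    (hn : Phim k 1 ρ = n) : Continuous fun θ => Complex.exp (sadS k ρ θ) := by
  have h := continuous_psiC k hk hρ
  have : (fun θ => Complex.exp (sadS k ρ θ)) = fun θ =>
      (Real.exp (Phim k 0 ρ) : ℂ)⁻¹ * (psiC k ρ θ * Complex.exp (-(n * θ * Complex.I))) := by
    funext θ
    rw [psiC_eq k hk hρ n hn, ← mul_assoc, inv_mul_cancel₀, one_mul]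
    exact_mod_cast (Real.exp_pos _).ne'
  rw [this]
  fun_prop

/-- The difference `pPk k (n + 1) - pPk k n` as one integral; the factor `e^{-iθ} - ρ` is small at
`θ = 0`, which is the source of `log (1/ρ)` in the main term. -/
lemma diff_eq_integral (k : ℕ) (hk : 1 ≤ k) {ρ : ℝ} (hρ : ρ ∈ Set.Ioo (0 : ℝ) 1) (n : ℕ)
    (hn : Phim k 1 ρ = n) :
    2 * Real.pi * (((pPk k (n + 1) : ℂ) - pPk k n) * ρ ^ (n + 1)) =
      Real.exp (Phim k 0 ρ) * ∫ θ in (-Real.pi)..Real.pi,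
        Complex.exp (sadS k ρ θ) * (Complex.exp (-(θ * Complex.I)) - ρ) := by
  have h1 := integral_psiC k hk hρ n
  have h2 := integral_psiC k hk hρ (n + 1)
  have hc := continuous_psiC k hk hρ
  rw [← intervalIntegral.integral_const_mul]
  have h3 : ∀ θ : ℝ, (Real.exp (Phim k 0 ρ) : ℂ) *
      (Complex.exp (sadS k ρ θ) * (Complex.exp (-(θ * Complex.I)) - ρ)) =
      psiC k ρ θ * Complex.exp (-(((n + 1 : ℕ) : ℂ) * θ * Complex.I)) -
        ρ * (psiC k ρ θ * Complex.exp (-(n * θ * Complex.I))) := by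
    intro θ
    have : Complex.exp (-(((n + 1 : ℕ) : ℂ) * θ * Complex.I)) =
        Complex.exp (-(n * θ * Complex.I)) * Complex.exp (-(θ * Complex.I)) := by
      rw [← Complex.exp_add]; congr 1; push_cast; ring
    rw [this, ← mul_assoc, ← psiC_eq k hk hρ n hn]; ring
  simp only [h3]
  rw [intervalIntegral.integral_sub, intervalIntegral.integral_const_mul, h1, h2]
  · ring
  · exact Continuous.intervalIntegrable (by fun_prop) _ _
  · exact Continuous.intervalIntegrable (by fun_prop) _ _

section

open MeasureTheory

/-! ### Laplace's method -/

lemma norm_exp_I_two (x : ℝ) :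
    ‖Complex.exp (x * Complex.I) - 1 - x * Complex.I‖ ≤ 3 * x ^ 2 := by
  have hx : ‖(x * Complex.I : ℂ)‖ = |x| := by simp
  rcases le_total |x| 1 with h | h
  · have h1 := Complex.norm_exp_sub_sum_le_norm_mul_exp (x * Complex.I) 2
    rw [hx, sq_abs] at h1
    have h2 : Real.exp |x| ≤ 3 :=
      (Real.exp_le_exp.2 h).trans Real.exp_one_lt_three.le
    simp only [Finset.sum_range_succ, Finset.sum_range_zero, pow_zero, pow_one, Nat.factorial,
      Nat.cast_one, div_one, zero_add, mul_one] at h1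
    rw [← sub_sub] at h1
    refine h1.trans ?_
    nlinarith [sq_nonneg x]
  · have h1 : ‖Complex.exp (x * Complex.I) - 1 - x * Complex.I‖ ≤ 1 + 1 + |x| := by
      refine (norm_sub_le _ _).trans (add_le_add ((norm_sub_le _ _).trans ?_) hx.le)
      rw [Complex.norm_exp_ofReal_mul_I, norm_one]
    rw [← sq_abs]
    nlinarith

lemma norm_exp_I_three (x : ℝ) :
    ‖Complex.exp (x * Complex.I) - 1 - x * Complex.I + x ^ 2 / 2‖ ≤ 4 * |x| ^ 3 := by
  have hx : ‖(x * Complex.I : ℂ)‖ = |x| := by simp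
  rcases le_total |x| 1 with h | h
  · have h1 := Complex.norm_exp_sub_sum_le_norm_mul_exp (x * Complex.I) 3
    rw [hx] at h1
    have h2 : Real.exp |x| ≤ 3 :=
      (Real.exp_le_exp.2 h).trans Real.exp_one_lt_three.le
    simp only [Finset.sum_range_succ, Finset.sum_range_zero, pow_zero, pow_one, Nat.factorial,
      Nat.cast_one, div_one, zero_add, mul_one, mul_pow, Complex.I_sq] at h1
    have e : Complex.exp (x * Complex.I) - 1 - x * Complex.I + x ^ 2 / 2 =
        Complex.exp (x * Complex.I) - (1 + x * Complex.I + x ^ 2 * -1 / ((Nat.succ 1 : ℕ) : ℂ)) := by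
      push_cast; ring
    rw [e]
    refine h1.trans ?_
    have : 0 ≤ |x| ^ 3 := by positivity
    nlinarith
  · have h1 : ‖Complex.exp (x * Complex.I) - 1 - x * Complex.I + x ^ 2 / 2‖ ≤
        1 + 1 + |x| + |x| ^ 2 / 2 := by
      refine (norm_add_le _ _).trans (add_le_add ((norm_sub_le _ _).trans
        (add_le_add ((norm_sub_le _ _).trans ?_) hx.le)) ?_)
      · rw [Complex.norm_exp_ofReal_mul_I, norm_one]
      · simp
    have h2 : |x| ≤ |x| ^ 3 := by nlinarith [mul_nonneg (sub_nonneg.2 h) (sub_nonneg.2 h)]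
    have h3 : |x| ^ 2 ≤ |x| ^ 3 := by nlinarith [sq_nonneg |x|]
    linarith

/-- Absolute moments of the Gaussian `e^{-Aθ²/2}`. -/
lemma gauss_moment (s : ℕ) : ∃ c : ℝ, 0 < c ∧ ∀ A : ℝ, 0 < A →
    Integrable (fun θ : ℝ => |θ| ^ s * Real.exp (-(A / 2) * θ ^ 2)) ∧
    ∫ θ : ℝ, |θ| ^ s * Real.exp (-(A / 2) * θ ^ 2) = c * A ^ (-((s : ℝ) + 1) / 2) := by
  refine ⟨2 * ((1 / 2 : ℝ) ^ (-((s : ℝ) + 1) / 2) * (1 / 2) * Real.Gamma (((s : ℝ) + 1) / 2)),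
    ?_, fun A hA => ⟨?_, ?_⟩⟩
  · have := Real.Gamma_pos_of_pos (show 0 < ((s : ℝ) + 1) / 2 by positivity)
    positivity
  · have h := (integrable_rpow_mul_exp_neg_mul_sq (half_pos hA) (s := s)
      (by have : (0 : ℝ) ≤ s := by positivity
          linarith)).norm
    refine h.congr (Eventually.of_forall fun θ => ?_)
    simp only [Real.rpow_natCast, norm_mul, norm_pow, Real.norm_eq_abs, Real.abs_exp]
  · have h1 := integral_comp_abs (f := fun θ : ℝ => θ ^ s * Real.exp (-(A / 2) * θ ^ 2))
    simp only [sq_abs] at h1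
    rw [h1]
    have h2 := integral_rpow_mul_exp_neg_mul_rpow (p := 2) (q := s) (b := A / 2) two_pos
      (by have : (0 : ℝ) ≤ s := by positivity
          linarith) (half_pos hA)
    simp only [Real.rpow_natCast, Real.rpow_two] at h2
    rw [h2, show A / 2 = 1 / 2 * A by ring, Real.mul_rpow (by norm_num) hA.le]
    ring

/-- Laplace's method with explicit error: `h` is close to the Gaussian `e^{-Aθ²/2}` where
`B|θ|³ ≤ 1` and at most `M` elsewhere on `[-π, π]`. The odd part `-iθ` of
`e^{-iθ} - (1-r) ≈ r - iθ` does not contribute to the main term. -/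
lemma laplace : ∃ K : ℝ, 0 < K ∧ ∀ (h : ℝ → ℂ) (A B r M : ℝ), Continuous h → 0 < A → 0 ≤ B →
    0 ≤ r → r ≤ 1 → 0 ≤ M →
    (∀ θ : ℝ, |θ| ≤ Real.pi → B * |θ| ^ 3 ≤ 1 → ‖h θ - Real.exp (-(A / 2) * θ ^ 2)‖ ≤
      4 * Real.exp 4 * (B * |θ| ^ 3 * Real.exp (-(A / 2) * θ ^ 2))) →
    (∀ θ : ℝ, |θ| ≤ Real.pi → 1 < B * |θ| ^ 3 → ‖h θ‖ ≤ M) →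
    ‖(∫ θ in (-Real.pi)..Real.pi, h θ * (Complex.exp (-(θ * Complex.I)) - (1 - r : ℝ))) -
      (r * √(2 * Real.pi / A) : ℝ)‖ ≤
      K * (r * B * A ^ (-2 : ℝ) + B * A ^ (-(5 / 2) : ℝ) + A ^ (-(3 / 2) : ℝ)) +
        4 * Real.pi * M := by
  obtain ⟨c2, hc2, H2⟩ := gauss_moment 2
  obtain ⟨c3, hc3, H3⟩ := gauss_moment 3
  obtain ⟨c4, hc4, H4⟩ := gauss_moment 4
  set K1 := 4 * Real.exp 4 with hK1
  have hK4 : 4 ≤ K1 := by have := Real.one_le_exp (show (0 : ℝ) ≤ 4 by norm_num); linarith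
  refine ⟨K1 * (c2 + c3 + c4), by positivity, ?_⟩
  intro h A B r M hc hA hB hr0 hr1 hM0 hmaj hmin
  obtain ⟨I2, J2⟩ := H2 A hA
  obtain ⟨I3, J3⟩ := H3 A hA
  obtain ⟨I4, J4⟩ := H4 A hA
  set G : ℝ → ℝ := fun θ => Real.exp (-(A / 2) * θ ^ 2) with hG
  have hG0 : ∀ θ, 0 < G θ := fun θ => Real.exp_pos _
  have hpi := Real.pi_pos
  have hpi3 := Real.pi_gt_three
  let w : ℝ → ℂ := fun θ => Complex.exp (-(θ * Complex.I)) - (1 - r : ℝ)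
  let S : Set ℝ := Set.Ioc (-Real.pi) Real.pi
  -- `q` is the integrand extended by zero, `m` its model `G(θ) (r - iθ)` on all of `ℝ`.
  let q : ℝ → ℂ := S.indicator fun θ => h θ * w θ
  let m : ℝ → ℂ := fun θ => r * (G θ : ℂ) - Complex.I * ((θ * G θ : ℝ) : ℂ)
  have hqc : Continuous fun θ => h θ * w θ := by fun_prop
  have hq : Integrable q := by
    rw [integrable_indicator_iff measurableSet_Ioc]
    exact (hqc.integrableOn_Icc).mono_set Set.Ioc_subset_Icc_self
  have hGi : Integrable G := integrable_exp_neg_mul_sq (half_pos hA)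
  have hGi1 : Integrable fun θ => θ * G θ := integrable_mul_exp_neg_mul_sq (half_pos hA)
  have hm : Integrable m := (hGi.ofReal.const_mul _).sub (hGi1.ofReal.const_mul _)
  have hqI : ∫ θ, q θ = ∫ θ in (-Real.pi)..Real.pi, h θ * w θ := by
    rw [intervalIntegral.integral_of_le (by linarith), integral_indicator measurableSet_Ioc]
  have hodd : ∫ θ, θ * G θ = 0 := by
    have h1 := integral_neg_eq_self (fun θ : ℝ => θ * G θ) volume
    have h2 : (fun θ : ℝ => -θ * G (-θ)) = fun θ => -(θ * G θ) := by
      funext θ; simp [hG]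
    rw [h2, integral_neg] at h1
    linarith
  have hmI : ∫ θ, m θ = (r * √(2 * Real.pi / A) : ℝ) := by
    have h1 : ∫ θ, G θ = √(2 * Real.pi / A) := by
      rw [hG, integral_gaussian]; congr 1; field_simp
    simp only [m]
    rw [integral_sub (hGi.ofReal.const_mul _) (hGi1.ofReal.const_mul _), integral_const_mul,
      integral_const_mul, integral_complex_ofReal, integral_complex_ofReal, hodd, h1]
    push_cast; ring
  have hw : ∀ θ, ‖w θ - (r - Complex.I * θ)‖ ≤ 3 * θ ^ 2 := by
    intro θ
    have h1 := norm_exp_I_two (-θ)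
    have e : w θ - (r - Complex.I * θ) =
        Complex.exp (((-θ : ℝ) : ℂ) * Complex.I) - 1 - ((-θ : ℝ) : ℂ) * Complex.I := by
      simp only [w]; push_cast; ring_nf
    rw [e]; simpa using h1
  have hw1 : ∀ θ, ‖w θ‖ ≤ r + |θ| := by
    intro θ
    have h1 := Real.norm_exp_I_mul_ofReal_sub_one_le (x := -θ)
    have e : w θ = r + (Complex.exp (Complex.I * ((-θ : ℝ) : ℂ)) - 1) := by
      simp only [w]; push_cast; ring_nf
    rw [e]
    refine (norm_add_le _ _).trans (add_le_add ?_ ?_)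
    · rw [Complex.norm_real, Real.norm_of_nonneg hr0]
    · simpa using h1
  have hmn : ∀ θ, ‖m θ‖ ≤ G θ * (r + |θ|) := by
    intro θ
    have e : m θ = (G θ : ℂ) * (r - Complex.I * θ) := by simp only [m]; push_cast; ring
    rw [e, norm_mul, Complex.norm_real, Real.norm_of_nonneg (hG0 θ).le]
    refine mul_le_mul_of_nonneg_left ((norm_sub_le _ _).trans (add_le_add ?_ ?_)) (hG0 θ).le
    · rw [Complex.norm_real, Real.norm_of_nonneg hr0]
    · simp
  -- The majorant `b` of `|q - m|`, in the three ranges `B|θ|³ ≤ 1`, `B|θ|³ > 1` and `|θ| > π`.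
  let b : ℝ → ℝ := fun θ => K1 * (B * r * (|θ| ^ 3 * G θ) + B * (|θ| ^ 4 * G θ) + |θ| ^ 2 * G θ) +
    S.indicator (fun _ => 2 * M) θ
  have hSi : Integrable (S.indicator fun _ => 2 * M) := by
    rw [integrable_indicator_iff measurableSet_Ioc]
    exact integrableOn_const (by simp)
  have i2 : Integrable fun θ => |θ| ^ 2 * G θ := I2
  have i3 : Integrable fun θ => B * r * (|θ| ^ 3 * G θ) := I3.const_mul _
  have i4 : Integrable fun θ => B * (|θ| ^ 4 * G θ) := I4.const_mul _
  have i34 : Integrable fun θ => B * r * (|θ| ^ 3 * G θ) + B * (|θ| ^ 4 * G θ) := i3.add i4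
  have j2 : ∫ θ, |θ| ^ 2 * G θ = c2 * A ^ (-((2 : ℕ) + 1 : ℝ) / 2) := J2
  have j3 : ∫ θ, |θ| ^ 3 * G θ = c3 * A ^ (-((3 : ℕ) + 1 : ℝ) / 2) := J3
  have j4 : ∫ θ, |θ| ^ 4 * G θ = c4 * A ^ (-((4 : ℕ) + 1 : ℝ) / 2) := J4
  have hb1 : Integrable fun θ =>
      B * r * (|θ| ^ 3 * G θ) + B * (|θ| ^ 4 * G θ) + |θ| ^ 2 * G θ := i34.add i2
  have hb : Integrable b := (hb1.const_mul _).add hSi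
  have hle : ∀ θ, ‖q θ - m θ‖ ≤ b θ := by
    intro θ
    have g0 := (hG0 θ).le
    have a0 := abs_nonneg θ
    have t3 : 0 ≤ B * r * (|θ| ^ 3 * G θ) := by positivity
    have t4 : 0 ≤ B * (|θ| ^ 4 * G θ) := by positivity
    have t2 : 0 ≤ |θ| ^ 2 * G θ := by positivity
    by_cases hθ : θ ∈ S
    · have habs : |θ| ≤ Real.pi := abs_le.2 ⟨hθ.1.le, hθ.2⟩
      simp only [b, q, Set.indicator_of_mem hθ]
      rcases le_or_gt (B * |θ| ^ 3) 1 with h1 | h1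
      · have e : h θ * w θ - m θ = (h θ - G θ) * w θ + G θ * (w θ - (r - Complex.I * θ)) := by
          simp only [m]; push_cast; ring
        have n1 : ‖(h θ - G θ) * w θ‖ ≤ K1 * (B * |θ| ^ 3 * G θ) * (r + |θ|) := by
          rw [norm_mul]
          exact mul_le_mul (hmaj θ habs h1) (hw1 θ) (norm_nonneg _) (by positivity)
        have n2 : ‖(G θ : ℂ) * (w θ - (r - Complex.I * θ))‖ ≤ G θ * (3 * θ ^ 2) := by
          rw [norm_mul, Complex.norm_real, Real.norm_of_nonneg g0]
          exact mul_le_mul_of_nonneg_left (hw θ) g0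
        rw [e]
        refine (norm_add_le _ _).trans ((add_le_add n1 n2).trans ?_)
        rw [← sq_abs θ]
        have : 3 * (|θ| ^ 2 * G θ) ≤ K1 * (|θ| ^ 2 * G θ) :=
          mul_le_mul_of_nonneg_right (by linarith) t2
        linarith
      · have n1 : ‖h θ * w θ‖ ≤ M * 2 := by
          rw [norm_mul]
          refine mul_le_mul (hmin θ habs h1) ?_ (norm_nonneg _) hM0
          refine (norm_sub_le _ _).trans ?_
          have e1 : -((θ : ℂ) * Complex.I) = ((-θ : ℝ) : ℂ) * Complex.I := by push_cast; ring
          rw [e1, Complex.norm_exp_ofReal_mul_I, Complex.norm_real,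
            Real.norm_of_nonneg (by linarith)]
          linarith
        have n2 : ‖m θ‖ ≤ B * r * (|θ| ^ 3 * G θ) + B * (|θ| ^ 4 * G θ) := by
          refine (hmn θ).trans ?_
          have : 0 ≤ G θ * (r + |θ|) := by positivity
          have := mul_le_mul_of_nonneg_right h1.le this
          linarith
        refine (norm_sub_le _ _).trans ((add_le_add n1 n2).trans ?_)
        have : 1 * (B * r * (|θ| ^ 3 * G θ) + B * (|θ| ^ 4 * G θ) + |θ| ^ 2 * G θ) ≤
            K1 * (B * r * (|θ| ^ 3 * G θ) + B * (|θ| ^ 4 * G θ) + |θ| ^ 2 * G θ) :=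
          mul_le_mul_of_nonneg_right (by linarith) (by positivity)
        linarith
    · simp only [b, q, Set.indicator_of_notMem hθ, zero_sub, norm_neg, add_zero]
      have habs : 3 ≤ |θ| := by
        by_contra hlt
        push Not at hlt
        obtain ⟨l1, l2⟩ := abs_lt.1 hlt
        exact hθ ⟨by linarith, by linarith⟩
      have n2 : ‖m θ‖ ≤ |θ| ^ 2 * G θ := by
        refine (hmn θ).trans ?_
        rw [mul_comm]
        refine mul_le_mul_of_nonneg_right ?_ g0
        nlinarith
      refine n2.trans ?_
      have : 1 * (B * r * (|θ| ^ 3 * G θ) + B * (|θ| ^ 4 * G θ) + |θ| ^ 2 * G θ) ≤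
          K1 * (B * r * (|θ| ^ 3 * G θ) + B * (|θ| ^ 4 * G θ) + |θ| ^ 2 * G θ) :=
        mul_le_mul_of_nonneg_right (by linarith) (by positivity)
      linarith
  have hfin := norm_integral_le_of_norm_le hb (Eventually.of_forall hle)
  rw [integral_sub hq hm, hqI, hmI] at hfin
  refine hfin.trans ?_
  have hbI : ∫ θ, b θ = K1 * (B * r * (c3 * A ^ (-((3 : ℕ) + 1 : ℝ) / 2)) +
      B * (c4 * A ^ (-((4 : ℕ) + 1 : ℝ) / 2)) + c2 * A ^ (-((2 : ℕ) + 1 : ℝ) / 2)) +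
      4 * Real.pi * M := by
    simp only [b]
    rw [integral_add (hb1.const_mul _) hSi, integral_const_mul,
      integral_add i34 i2, integral_add i3 i4, integral_const_mul, integral_const_mul,
      j2, j3, j4, integral_indicator measurableSet_Ioc]
    congr 1
    simp [hpi.le]
    ring
  rw [hbI, add_le_add_iff_right, mul_assoc K1]
  refine mul_le_mul_of_nonneg_left ?_ (by positivity)
  have e3 : (-((3 : ℕ) + 1 : ℝ) / 2) = -2 := by norm_num
  have e4 : (-((4 : ℕ) + 1 : ℝ) / 2) = -(5 / 2) := by norm_num
  have e2 : (-((2 : ℕ) + 1 : ℝ) / 2) = -(3 / 2) := by norm_num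
  rw [e3, e4, e2]
  have p3 : 0 ≤ r * B * A ^ (-2 : ℝ) := by positivity
  have p4 : 0 ≤ B * A ^ (-(5 / 2) : ℝ) := by positivity
  have p2 : 0 ≤ A ^ (-(3 / 2) : ℝ) := by positivity
  nlinarith [mul_nonneg hc2.le p3, mul_nonneg hc2.le p4, mul_nonneg hc3.le p2,
    mul_nonneg hc3.le p4, mul_nonneg hc4.le p2, mul_nonneg hc4.le p3]

/-! ### The integrand near and away from the saddle point -/

lemma summable_sad (k : ℕ) (hk : 1 ≤ k) {ρ : ℝ} (hρ : ρ ∈ Set.Ioo (0 : ℝ) 1) (θ : ℝ) :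
    Summable fun i => (wgt k ρ i : ℂ) * (Complex.exp ((lam k i : ℝ) * θ * Complex.I) - 1 -
      (lam k i : ℝ) * θ * Complex.I) := by
  refine Summable.of_norm_bounded (g := fun i => wgt k ρ i * (lam k i : ℝ) ^ 2 * (3 * θ ^ 2))
    ((summable_wgt k 2 hk hρ).mul_right _) fun i => ?_
  have h := norm_exp_I_two ((lam k i : ℝ) * θ)
  push_cast at h
  rw [norm_mul, Complex.norm_real, Real.norm_of_nonneg (wgt_nonneg k hρ.1.le i)]
  calc _ ≤ wgt k ρ i * (3 * ((lam k i : ℝ) * θ) ^ 2) :=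
        mul_le_mul_of_nonneg_left (by exact_mod_cast h) (wgt_nonneg k hρ.1.le i)
    _ = _ := by ring

/-- Near `0`, `S(θ) = -Φ₂ θ²/2 + O(Φ₃ |θ|³)`. -/
lemma sadS_taylor (k : ℕ) (hk : 1 ≤ k) {ρ : ℝ} (hρ : ρ ∈ Set.Ioo (0 : ℝ) 1) (θ : ℝ) :
    ‖sadS k ρ θ + ((Phim k 2 ρ / 2 * θ ^ 2 : ℝ) : ℂ)‖ ≤ 4 * (Phim k 3 ρ * |θ| ^ 3) := by
  have h2 : HasSum (fun i => ((wgt k ρ i * (lam k i : ℝ) ^ 2 * (θ ^ 2 / 2) : ℝ) : ℂ))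
      ((Phim k 2 ρ / 2 * θ ^ 2 : ℝ) : ℂ) := by
    rw [Complex.hasSum_ofReal, Phim_eq_tsum k 2 hk hρ]
    rw [div_mul_eq_mul_div, mul_div_assoc]
    exact (summable_wgt k 2 hk hρ).hasSum.mul_right (θ ^ 2 / 2)
  have h3 : HasSum (fun i => wgt k ρ i * (lam k i : ℝ) ^ 3 * (4 * |θ| ^ 3))
      (4 * (Phim k 3 ρ * |θ| ^ 3)) := by
    rw [Phim_eq_tsum k 3 hk hρ]
    rw [mul_left_comm]
    exact (summable_wgt k 3 hk hρ).hasSum.mul_right (4 * |θ| ^ 3)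
  have h1 := (summable_sad k hk hρ θ).hasSum.add h2
  rw [← sadS] at h1
  rw [← h1.tsum_eq]
  refine tsum_of_norm_bounded h3 fun i => ?_
  have h := norm_exp_I_three ((lam k i : ℝ) * θ)
  have e : (wgt k ρ i : ℂ) * (Complex.exp ((lam k i : ℝ) * θ * Complex.I) - 1 -
      (lam k i : ℝ) * θ * Complex.I) + ((wgt k ρ i * (lam k i : ℝ) ^ 2 * (θ ^ 2 / 2) : ℝ) : ℂ) =
      (wgt k ρ i : ℂ) * (Complex.exp (((lam k i : ℝ) * θ : ℝ) * Complex.I) - 1 -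
      ((lam k i : ℝ) * θ : ℝ) * Complex.I + ((lam k i : ℝ) * θ : ℝ) ^ 2 / 2) := by
    push_cast; ring
  rw [e, norm_mul, Complex.norm_real, Real.norm_of_nonneg (wgt_nonneg k hρ.1.le i)]
  refine (mul_le_mul_of_nonneg_left h (wgt_nonneg k hρ.1.le i)).trans (le_of_eq ?_)
  rw [abs_mul, abs_of_nonneg (show (0 : ℝ) ≤ lam k i by positivity)]
  ring

/-- Near the saddle point `e^{S(θ)}` is the Gaussian `e^{-Φ₂θ²/2}` up to a relative error
`O(Φ₃|θ|³)`. -/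
lemma major_bound (k : ℕ) (hk : 1 ≤ k) {ρ : ℝ} (hρ : ρ ∈ Set.Ioo (0 : ℝ) 1) (θ : ℝ)
    (h1 : Phim k 3 ρ * |θ| ^ 3 ≤ 1) :
    ‖Complex.exp (sadS k ρ θ) - Real.exp (-(Phim k 2 ρ / 2) * θ ^ 2)‖ ≤
      4 * Real.exp 4 * (Phim k 3 ρ * |θ| ^ 3 * Real.exp (-(Phim k 2 ρ / 2) * θ ^ 2)) := by
  have h := sadS_taylor k hk hρ θ
  set R := sadS k ρ θ + ((Phim k 2 ρ / 2 * θ ^ 2 : ℝ) : ℂ) with hR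
  have e : Complex.exp (sadS k ρ θ) - Real.exp (-(Phim k 2 ρ / 2) * θ ^ 2) =
      ((Real.exp (-(Phim k 2 ρ / 2) * θ ^ 2) : ℝ) : ℂ) * (Complex.exp R - 1) := by
    rw [mul_sub, mul_one, Complex.ofReal_exp, ← Complex.exp_add, hR]
    congr 2; push_cast; ring
  rw [e, norm_mul, Complex.norm_real, Real.norm_of_nonneg (Real.exp_pos _).le]
  have h2 := Complex.norm_exp_sub_sum_le_norm_mul_exp R 1
  simp only [Finset.sum_range_one, pow_zero, Nat.factorial_zero, Nat.cast_one, div_one,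
    pow_one] at h2
  have h3 : ‖Complex.exp R - 1‖ ≤ 4 * (Phim k 3 ρ * |θ| ^ 3) * Real.exp 4 :=
    h2.trans (mul_le_mul h (Real.exp_le_exp.2 (by linarith)) (Real.exp_pos _).le
      ((norm_nonneg _).trans h))
  refine (mul_le_mul_of_nonneg_left h3 (Real.exp_pos _).le).trans (le_of_eq ?_)
  ring

/-- The size of `e^{S(θ)}` is governed by the sum of `w (1 - cos λθ)`. -/
lemma norm_exp_sadS (k : ℕ) (hk : 1 ≤ k) {ρ : ℝ} (hρ : ρ ∈ Set.Ioo (0 : ℝ) 1) (θ : ℝ) :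
    (Summable fun i => wgt k ρ i * (1 - Real.cos ((lam k i : ℝ) * θ))) ∧
    ‖Complex.exp (sadS k ρ θ)‖ =
      Real.exp (-∑' i, wgt k ρ i * (1 - Real.cos ((lam k i : ℝ) * θ))) := by
  have h1 := Complex.hasSum_re (summable_sad k hk hρ θ).hasSum
  rw [← sadS] at h1
  have e : (fun i => ((wgt k ρ i : ℂ) * (Complex.exp ((lam k i : ℝ) * θ * Complex.I) - 1 -
      (lam k i : ℝ) * θ * Complex.I)).re) =
      fun i => -(wgt k ρ i * (1 - Real.cos ((lam k i : ℝ) * θ))) := by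
    funext i
    rw [Complex.re_ofReal_mul]
    have e1 : ((lam k i : ℝ) : ℂ) * θ = (((lam k i : ℝ) * θ : ℝ) : ℂ) := by push_cast; ring
    rw [e1, Complex.sub_re, Complex.sub_re, Complex.exp_ofReal_mul_I_re, Complex.one_re]
    simp only [Complex.mul_re, Complex.ofReal_re, Complex.I_re, Complex.ofReal_im, Complex.I_im]
    ring
  rw [e] at h1
  have h2 := h1.neg
  simp only [neg_neg] at h2
  refine ⟨h2.summable, ?_⟩
  rw [Complex.norm_exp, h2.tsum_eq, neg_neg]

lemma exp_mem_Ioo {X : ℝ} (hX : 0 < X) : Real.exp (-1 / X) ∈ Set.Ioo (0 : ℝ) 1 := by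
  refine ⟨Real.exp_pos _, ?_⟩
  rw [Real.exp_lt_one_iff]
  exact div_neg_of_neg_of_pos (by norm_num) hX

/-- Away from the saddle point, `|Ψ(ρ e^{iθ})| / Ψ(ρ)` is smaller than any power of `X`. The condition
`Φ₃|θ|³ > 1` gives a lower bound for `θ²`, so both terms of the minimum in `minor_arc` are at least a
constant times `X^{1/(6k)}`. -/
lemma minor_bound (k : ℕ) (hk : 1 ≤ k) (L : ℝ) : ∀ᶠ X : ℝ in atTop, ∀ θ : ℝ, |θ| ≤ Real.pi →
    1 < Phim k 3 (Real.exp (-1 / X)) * |θ| ^ 3 →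
    ‖Complex.exp (sadS k (Real.exp (-1 / X)) θ)‖ ≤ X ^ (-L) := by
  have hk0 : (0 : ℝ) < k := by exact_mod_cast hk
  have hk1 : (1 : ℝ) ≤ k := by exact_mod_cast hk
  set ε : ℝ := 1 / (24 * k) with hε
  have hε0 : 0 < ε := by positivity
  have hε1 : ε ≤ 1 / 24 := by
    rw [hε]; gcongr; linarith
  obtain ⟨C, hC, hB⟩ := Phim_le k 3 hk ε hε0
  obtain ⟨ht, hf⟩ := floor_root k hk
  set c1 : ℝ := (1 / 2 : ℝ) ^ (1 / 2 : ℝ) with hc1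
  set c2 : ℝ := (1 / (4 * Real.pi ^ 2)) * C ^ (-(2 / 3) : ℝ) * (1 / 2 : ℝ) ^ ((2 * k + 1) * (1 - ε))
    with hc2
  have hpi := Real.pi_pos
  have hc1p : 0 < c1 := by positivity
  have hc2p : 0 < c2 := by positivity
  set c := Real.exp (-1) * min c1 c2 with hc
  have hcp : 0 < c := mul_pos (Real.exp_pos _) (lt_min hc1p hc2p)
  have hdec : ∀ᶠ X : ℝ in atTop, Real.exp (-(c * X ^ (1 / (6 * k) : ℝ))) ≤ X ^ (-L) := by
    have h1 := isLittleO_exp_neg_mul_rpow_atTop hcp (-(L * (6 * k)))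
    have h2 := (tendsto_rpow_atTop (show (0 : ℝ) < 1 / (6 * k) by positivity)).eventually
      (h1.bound one_pos)
    filter_upwards [h2, eventually_gt_atTop 0] with X hX hX0
    rw [Real.norm_of_nonneg (Real.exp_pos _).le, Real.norm_of_nonneg (by positivity), one_mul,
      ← Real.rpow_mul hX0.le, neg_mul] at hX
    refine hX.trans (le_of_eq ?_)
    congr 1; field_simp
  filter_upwards [hf, ht.eventually (minor_arc k hk ε hε0), hdec, eventually_ge_atTop 1]
    with X ⟨hP1, hP2⟩ hmin hd hX1 θ hθ hBθ
  have hX0 : 0 < X := by linarith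
  have hρ := exp_mem_Ioo hX0
  obtain ⟨hs, hn⟩ := norm_exp_sadS k hk hρ θ
  rw [hn]
  refine le_trans (Real.exp_le_exp.2 (neg_le_neg ?_)) hd
  set P := ⌊X ^ (1 / (k : ℝ))⌋₊
  have h1 := tsum_wgt_ge k X hX0 (fun l => 1 - Real.cos ((l : ℝ) * θ))
    (fun l => by linarith [Real.cos_le_one ((l : ℝ) * θ)]) hs P hP1
  refine le_trans ?_ h1
  have h2 := hmin (θ / (2 * Real.pi)) (by
    rw [abs_div, abs_of_pos (by positivity : 0 < 2 * Real.pi), div_le_iff₀ (by positivity)]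
    linarith)
  have h3 : ∑ p ∈ P.primesLE, (1 - Real.cos (2 * Real.pi * ((p : ℝ) ^ k * (θ / (2 * Real.pi))))) =
      ∑ p ∈ P.primesLE, (1 - Real.cos (((p ^ k : ℕ) : ℝ) * θ)) := by
    refine Finset.sum_congr rfl fun p _ => ?_
    congr 2; push_cast; field_simp
  rw [h3] at h2
  rw [hc, mul_assoc]
  refine mul_le_mul_of_nonneg_left (le_trans ?_ h2) (Real.exp_pos _).le
  have hXr : 0 < X ^ (1 / (6 * k) : ℝ) := by positivity
  refine le_min ?_ ?_
  · calc min c1 c2 * X ^ (1 / (6 * k) : ℝ) ≤ c1 * X ^ (1 / (k : ℝ) * (1 / 2)) := by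
          refine mul_le_mul (min_le_left _ _) ?_ hXr.le hc1p.le
          refine Real.rpow_le_rpow_of_exponent_le hX1 ?_
          rw [div_mul_div_comm, one_mul]
          exact one_div_le_one_div_of_le (by positivity) (by linarith)
      _ = (X ^ (1 / (k : ℝ)) / 2) ^ (1 / 2 : ℝ) := by
          rw [hc1, Real.rpow_mul hX0.le, ← Real.mul_rpow (by norm_num) (by positivity)]
          congr 1; ring
      _ ≤ _ := Real.rpow_le_rpow (by positivity) hP2 (by norm_num)
  · have hB' := hB X hX0
    have hθ0 : 0 < |θ| := by
      rcases (abs_nonneg θ).lt_or_eq with h | h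
      · exact h
      · rw [← h] at hBθ; norm_num at hBθ
    have h4 : 1 ≤ C * X ^ ((3 : ℕ) + (1 / (k : ℝ) + ε)) * |θ| ^ 3 :=
      hBθ.le.trans (mul_le_mul_of_nonneg_right hB' (by positivity))
    have h5 : (C * X ^ ((3 : ℕ) + (1 / (k : ℝ) + ε))) ^ (-(2 / 3) : ℝ) ≤ θ ^ 2 := by
      set Q := C * X ^ ((3 : ℕ) + (1 / (k : ℝ) + ε)) with hQ
      have hQ0 : 0 < Q := by positivity
      have h6 : Q⁻¹ ≤ |θ| ^ 3 := by
        rw [inv_le_iff_one_le_mul₀ hQ0]; linarith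
      have h7 := Real.rpow_le_rpow (by positivity) h6 (show (0 : ℝ) ≤ 2 / 3 by norm_num)
      rw [← Real.rpow_natCast, ← Real.rpow_mul hθ0.le, Real.inv_rpow hQ0.le,
        ← Real.rpow_neg hQ0.le] at h7
      rw [show ((3 : ℕ) : ℝ) * (2 / 3) = (2 : ℕ) by norm_num, Real.rpow_natCast, sq_abs] at h7
      exact h7
    have h8 : (X ^ (1 / (k : ℝ)) / 2) ^ ((2 * k + 1) * (1 - ε)) ≤
        (P : ℝ) ^ ((2 * k + 1) * (1 - ε)) :=
      Real.rpow_le_rpow (by positivity) hP2 (mul_nonneg (by positivity) (by linarith))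
    calc min c1 c2 * X ^ (1 / (6 * k) : ℝ)
        ≤ c2 * X ^ (((3 : ℕ) + (1 / (k : ℝ) + ε)) * (-(2 / 3)) +
            1 / (k : ℝ) * ((2 * k + 1) * (1 - ε))) := by
          refine mul_le_mul (min_le_right _ _) ?_ hXr.le hc2p.le
          refine Real.rpow_le_rpow_of_exponent_le hX1 ?_
          rw [hε]
          push_cast
          rw [← sub_nonneg]
          have e : (3 + (1 / (k : ℝ) + 1 / (24 * k))) * (-(2 / 3)) +
              1 / (k : ℝ) * ((2 * k + 1) * (1 - 1 / (24 * k))) - 1 / (6 * k) =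
              (4 * k - 3) / (72 * k ^ 2) := by
            field_simp; ring
          rw [e]
          exact div_nonneg (by linarith) (by positivity)
      _ = (1 / (4 * Real.pi ^ 2)) * (C * X ^ ((3 : ℕ) + (1 / (k : ℝ) + ε))) ^ (-(2 / 3) : ℝ) *
          (X ^ (1 / (k : ℝ)) / 2) ^ ((2 * k + 1) * (1 - ε)) := by
          rw [Real.mul_rpow hC.le (by positivity), ← Real.rpow_mul hX0.le,
            show X ^ (1 / (k : ℝ)) / 2 = 1 / 2 * X ^ (1 / (k : ℝ)) by ring,
            Real.mul_rpow (by norm_num) (by positivity), ← Real.rpow_mul hX0.le,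
            Real.rpow_add hX0, hc2]
          ring
      _ ≤ (1 / (4 * Real.pi ^ 2)) * θ ^ 2 * (P : ℝ) ^ ((2 * k + 1) * (1 - ε)) := by
          gcongr
      _ = _ := by
          congr 1; field_simp; ring

/-! ### The relative error -/

/-- The main term of the asymptotic formula for `pPk k (n + 1) - pPk k n`. -/
noncomputable def mainTerm (k n : ℕ) (ρ : ℝ) : ℝ :=
  ρ ^ (-(n : ℤ)) * Real.log (1 / ρ) * Real.exp (Phim k 0 ρ) /
    Real.sqrt (2 * Real.pi * Phim k 2 ρ)

/-- Relative error of the main term in terms of `X = 1 / log (1/ρ)`, `A = Φ₂`, `B = Φ₃` and a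
bound `M` for the integrand on the minor arcs. -/
lemma rel_error : ∃ K : ℝ, 0 < K ∧ ∀ (k n : ℕ) (X M : ℝ), 1 ≤ k → 1 ≤ X → 0 ≤ M →
    Phim k 1 (Real.exp (-1 / X)) = n → 0 < Phim k 2 (Real.exp (-1 / X)) →
    (∀ θ : ℝ, |θ| ≤ Real.pi → 1 < Phim k 3 (Real.exp (-1 / X)) * |θ| ^ 3 →
      ‖Complex.exp (sadS k (Real.exp (-1 / X)) θ)‖ ≤ M) →
    0 < mainTerm k n (Real.exp (-1 / X)) ∧
    |((pPk k (n + 1) : ℝ) - pPk k n) / mainTerm k n (Real.exp (-1 / X)) - 1| ≤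
      1 / X + K * (Phim k 3 (Real.exp (-1 / X)) * Phim k 2 (Real.exp (-1 / X)) ^ (-(3 / 2) : ℝ) +
        X * Phim k 3 (Real.exp (-1 / X)) * Phim k 2 (Real.exp (-1 / X)) ^ (-2 : ℝ) +
        X * Phim k 2 (Real.exp (-1 / X)) ^ (-1 : ℝ) +
        X * Phim k 2 (Real.exp (-1 / X)) ^ (1 / 2 : ℝ) * M) := by
  obtain ⟨K, hK, hlap⟩ := laplace
  refine ⟨3 * K + 12 * Real.pi, by have := Real.pi_pos; positivity, ?_⟩
  intro k n X M hk hX hM hn hA hmin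
  have hX0 : 0 < X := by linarith
  have hρ := exp_mem_Ioo hX0
  set ρ := Real.exp (-1 / X) with hρdef
  set A := Phim k 2 ρ with hAdef
  set B := Phim k 3 ρ with hBdef
  have hB : 0 ≤ B := by
    rw [hBdef, Phim_eq_tsum k 3 hk hρ]
    exact tsum_nonneg fun i => mul_nonneg (wgt_nonneg k hρ.1.le i) (by positivity)
  have hpi := Real.pi_pos
  have hlog : Real.log (1 / ρ) = 1 / X := by
    rw [one_div, Real.log_inv, hρdef, Real.log_exp]; ring
  set Ps := Real.exp (Phim k 0 ρ) with hPs
  have hPs0 : 0 < Ps := Real.exp_pos _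
  have hρ0 := hρ.1
  have hT0 : 0 < mainTerm k n ρ := by
    unfold mainTerm
    rw [hlog, ← hAdef]
    positivity
  refine ⟨hT0, ?_⟩
  set D : ℝ := (pPk k (n + 1) : ℝ) - pPk k n with hD
  set r := 1 - ρ with hr
  have hlap := hlap (fun θ => Complex.exp (sadS k ρ θ)) A B r M (continuous_sadS k hk hρ n hn) hA hB
    (by linarith [hρ.2]) (by linarith) hM (fun θ _ h1 => major_bound k hk hρ θ h1) hmin
  have hcauchy := diff_eq_integral k hk hρ n hn
  -- `y` is the integral and `c` the normalisation, so that the ratio to the main term is `c y`.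
  set y : ℝ := 2 * Real.pi * (D * ρ ^ (n + 1)) / Ps with hy
  have hyJ : (∫ θ in (-Real.pi)..Real.pi, Complex.exp (sadS k ρ θ) *
      (Complex.exp (-(θ * Complex.I)) - (1 - r : ℝ))) = (y : ℂ) := by
    rw [show 1 - r = ρ by rw [hr]; ring, hy, hD]
    push_cast
    rw [hcauchy, mul_div_cancel_left₀]
    exact_mod_cast hPs0.ne'
  rw [hyJ, ← Complex.ofReal_sub, Complex.norm_real, Real.norm_eq_abs] at hlap
  set s := √(2 * Real.pi / A) with hs
  set c := Real.exp (1 / X) * X * √(2 * Real.pi * A) / (2 * Real.pi) with hc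
  have hc0 : 0 ≤ c := by positivity
  have hρinv : Real.exp (1 / X) * ρ = 1 := by
    rw [hρdef, ← Real.exp_add, show 1 / X + -1 / X = 0 by ring, Real.exp_zero]
  have h1 : D / mainTerm k n ρ = c * y := by
    unfold mainTerm
    rw [hlog, ← hAdef, ← hPs, hc, hy, zpow_neg, zpow_natCast, pow_succ]
    have hq : √(2 * Real.pi * A) ≠ 0 := by positivity
    rw [show Real.exp (1 / X) * X * √(2 * Real.pi * A) / (2 * Real.pi) *
      (2 * Real.pi * (D * (ρ ^ n * ρ)) / Ps) = (Real.exp (1 / X) * ρ) *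
        (X * √(2 * Real.pi * A) * (D * ρ ^ n) / Ps) by field_simp, hρinv]
    field_simp
  have h2 : c * (r * s) = (Real.exp (1 / X) - 1) * X := by
    have e1 : √(2 * Real.pi * A) * s = 2 * Real.pi := by
      rw [hs, ← Real.sqrt_mul (by positivity),
        show 2 * Real.pi * A * (2 * Real.pi / A) = (2 * Real.pi) ^ 2 by field_simp,
        Real.sqrt_sq (by positivity)]
    rw [hc, show Real.exp (1 / X) * X * √(2 * Real.pi * A) / (2 * Real.pi) * (r * s) =
      (Real.exp (1 / X) * r) * X * (√(2 * Real.pi * A) * s) / (2 * Real.pi) by ring, e1, hr,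
      mul_sub, mul_one, hρinv]
    field_simp
  have h3 : |(Real.exp (1 / X) - 1) * X - 1| ≤ 1 / X := by
    have hle : |1 / X| ≤ 1 := by
      rw [abs_of_pos (by positivity), div_le_one hX0]; exact hX
    have h4 := Real.abs_exp_sub_one_sub_id_le hle
    have e : (Real.exp (1 / X) - 1) * X - 1 = (Real.exp (1 / X) - 1 - 1 / X) * X := by
      field_simp
    rw [e, abs_mul, abs_of_pos hX0]
    calc _ ≤ (1 / X) ^ 2 * X := mul_le_mul_of_nonneg_right h4 hX0.le
      _ = 1 / X := by field_simp
  have h4 : c ≤ 3 * (X * A ^ (1 / 2 : ℝ)) := by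
    have e1 : Real.exp (1 / X) ≤ 3 := by
      refine (Real.exp_le_exp.2 ?_).trans Real.exp_one_lt_three.le
      rw [div_le_one hX0]; exact hX
    have e2 : √(2 * Real.pi * A) ≤ 2 * Real.pi * A ^ (1 / 2 : ℝ) := by
      rw [Real.sqrt_mul (by positivity), ← Real.sqrt_eq_rpow]
      refine mul_le_mul_of_nonneg_right ?_ (Real.sqrt_nonneg _)
      rw [Real.sqrt_le_left (by positivity)]
      have : 1 ≤ 2 * Real.pi := by linarith [Real.pi_gt_three]
      nlinarith
    rw [hc, div_le_iff₀ (by positivity)]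
    calc _ ≤ 3 * X * (2 * Real.pi * A ^ (1 / 2 : ℝ)) := by gcongr
      _ = _ := by ring
  have hrX : X * r ≤ 1 := by
    have := Real.add_one_le_exp (-1 / X)
    rw [← hρdef] at this
    have h5 : r ≤ 1 / X := by
      rw [hr]
      have e : -1 / X = -(1 / X) := by ring
      linarith
    calc X * r ≤ X * (1 / X) := mul_le_mul_of_nonneg_left h5 hX0.le
      _ = 1 := by field_simp
  have a1 : A ^ (1 / 2 : ℝ) * A ^ (-2 : ℝ) = A ^ (-(3 / 2) : ℝ) := by
    rw [← Real.rpow_add hA]; norm_num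
  have a2 : A ^ (1 / 2 : ℝ) * A ^ (-(5 / 2) : ℝ) = A ^ (-2 : ℝ) := by
    rw [← Real.rpow_add hA]; norm_num
  have a3 : A ^ (1 / 2 : ℝ) * A ^ (-(3 / 2) : ℝ) = A ^ (-1 : ℝ) := by
    rw [← Real.rpow_add hA]; norm_num
  have h6 : D / mainTerm k n ρ - 1 = c * (y - r * s) + ((Real.exp (1 / X) - 1) * X - 1) := by
    rw [h1, ← h2]; ring
  rw [h6]
  refine (abs_add_le _ _).trans ?_
  rw [abs_mul, abs_of_nonneg hc0, add_comm]
  refine add_le_add h3 ?_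
  have hr0 : 0 ≤ r := by linarith [hρ.2]
  calc c * |y - r * s| ≤ 3 * (X * A ^ (1 / 2 : ℝ)) *
        (K * (r * B * A ^ (-2 : ℝ) + B * A ^ (-(5 / 2) : ℝ) + A ^ (-(3 / 2) : ℝ)) +
        4 * Real.pi * M) := mul_le_mul h4 hlap (abs_nonneg _) (by positivity)
    _ = 3 * K * ((X * r) * (B * (A ^ (1 / 2 : ℝ) * A ^ (-2 : ℝ))) +
        X * B * (A ^ (1 / 2 : ℝ) * A ^ (-(5 / 2) : ℝ)) +
        X * (A ^ (1 / 2 : ℝ) * A ^ (-(3 / 2) : ℝ))) +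
        12 * Real.pi * (X * A ^ (1 / 2 : ℝ) * M) := by ring
    _ ≤ 3 * K * (1 * (B * A ^ (-(3 / 2) : ℝ)) + X * B * A ^ (-2 : ℝ) + X * A ^ (-1 : ℝ)) +
        12 * Real.pi * (X * A ^ (1 / 2 : ℝ) * M) := by
        rw [a1, a2, a3]; gcongr
    _ ≤ _ := by
        have p1 : 0 ≤ B * A ^ (-(3 / 2) : ℝ) := by positivity
        have p2 : 0 ≤ X * B * A ^ (-2 : ℝ) := by positivity
        have p3 : 0 ≤ X * A ^ (-1 : ℝ) := by positivity
        have p4 : 0 ≤ X * A ^ (1 / 2 : ℝ) * M := by positivity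
        have q1 : 0 ≤ 12 * Real.pi * (B * A ^ (-(3 / 2) : ℝ) + X * B * A ^ (-2 : ℝ) +
          X * A ^ (-1 : ℝ)) := by positivity
        have q2 : 0 ≤ 3 * K * (X * A ^ (1 / 2 : ℝ) * M) := by positivity
        linarith

/-- The relative error is `O(X^{-1/(2k) + 3ε})` for a small `ε`, by the bounds `Φ₂ ≫ X^{2 + 1/k - ε}` and
`Φ₃ ≪ X^{3 + 1/k + ε}`. As `n = Φ₁ ≪ X^{1 + 1/k + ε}`, this is `O(n^{-1/(2k+3)})`: the exponent
`1/(2k+2)` would be attained at `ε = 0`. -/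
lemma rel_error_X (k : ℕ) (hk : 1 ≤ k) : ∃ C : ℝ, 0 < C ∧ ∀ᶠ X : ℝ in atTop, ∀ n : ℕ, 1 ≤ n →
    Phim k 1 (Real.exp (-1 / X)) = n →
    0 < mainTerm k n (Real.exp (-1 / X)) ∧
    |((pPk k (n + 1) : ℝ) - pPk k n) / mainTerm k n (Real.exp (-1 / X)) - 1| ≤
      C * (n : ℝ) ^ (-(1 : ℝ) / (2 * (k : ℝ) + 3)) := by
  have hk0 : (0 : ℝ) < k := by exact_mod_cast hk
  have hk1 : (1 : ℝ) ≤ k := by exact_mod_cast hk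
  obtain ⟨K, hK, hrel⟩ := rel_error
  set ε : ℝ := 1 / (8 * k * (2 * k + 3)) with hε
  have hε0 : 0 < ε := by positivity
  have hkinv : 1 / (k : ℝ) ≤ 1 := by rw [div_le_one hk0]; exact hk1
  have hεk : 40 * ε ≤ 1 / k := by
    rw [hε, mul_one_div, div_le_div_iff₀ (by positivity) hk0]
    nlinarith
  obtain ⟨CB, hCB, hB⟩ := Phim_le k 3 hk ε hε0
  obtain ⟨CA, hCA, hA⟩ := Phim_le k 2 hk ε hε0
  obtain ⟨C1, hC1, h1⟩ := Phim_le k 1 hk ε hε0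
  obtain ⟨c, hc, hlow⟩ := Phim_two_ge k hk (ε / 3) (by positivity) (by linarith)
  set e0 : ℝ := -(1 / (2 * k)) + 3 * ε with he0
  have h2k : 1 / (2 * (k : ℝ)) = (1 / k) / 2 := by field_simp
  set C0 := 1 + K * (CB * c ^ (-(3 / 2) : ℝ) + CB * c ^ (-2 : ℝ) + c ^ (-1 : ℝ) +
    CA ^ (1 / 2 : ℝ)) with hC0
  have hC0p : 0 < C0 := by positivity
  refine ⟨C0 * C1 ^ (1 / (2 * (k : ℝ) + 3)), by positivity, ?_⟩
  filter_upwards [hlow, minor_bound k hk 4, eventually_ge_atTop 1] with X hl hmin hX1 n hn1 hn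
  have hX0 : 0 < X := by linarith
  set A := Phim k 2 (Real.exp (-1 / X)) with hAdef
  set B := Phim k 3 (Real.exp (-1 / X)) with hBdef
  have hlA : c * X ^ (2 + 1 / (k : ℝ) - ε) ≤ A := by
    refine le_trans ?_ hl
    refine mul_le_mul_of_nonneg_left (Real.rpow_le_rpow_of_exponent_le hX1 ?_) hc.le
    have : (2 + 1 / (k : ℝ)) * (ε / 3) ≤ 3 * (ε / 3) :=
      mul_le_mul_of_nonneg_right (by linarith) (by positivity)
    linarith
  have hApos : 0 < A := lt_of_lt_of_le (by positivity) hlA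
  have hAneg : ∀ t : ℝ, 0 ≤ t → A ^ (-t) ≤ c ^ (-t) * X ^ ((2 + 1 / (k : ℝ) - ε) * -t) := by
    intro t ht
    rw [Real.rpow_mul hX0.le, ← Real.mul_rpow hc.le (by positivity)]
    exact Real.rpow_le_rpow_of_nonpos (by positivity) hlA (by linarith)
  have hBX := hB X hX0
  rw [← hBdef] at hBX
  have hB0 : 0 ≤ B := by
    rw [hBdef, Phim_eq_tsum k 3 hk (exp_mem_Ioo hX0)]
    exact tsum_nonneg fun i => mul_nonneg (wgt_nonneg k (Real.exp_pos _).le i) (by positivity)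
  have hAX := hA X hX0
  rw [← hAdef] at hAX
  obtain ⟨hT, hE⟩ := hrel k n X (X ^ (-4 : ℝ)) hk hX1 (by positivity) hn hApos hmin
  refine ⟨hT, hE.trans ?_⟩
  have hmono : ∀ t : ℝ, t ≤ e0 → X ^ t ≤ X ^ e0 := fun t ht =>
    Real.rpow_le_rpow_of_exponent_le hX1 ht
  have t0 : 1 / X ≤ X ^ e0 := by
    rw [one_div, ← Real.rpow_neg_one]
    refine hmono _ ?_
    rw [he0, h2k]; linarith
  have t1 : B * A ^ (-(3 / 2) : ℝ) ≤ CB * c ^ (-(3 / 2) : ℝ) * X ^ e0 := by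
    calc _ ≤ CB * X ^ ((3 : ℕ) + (1 / (k : ℝ) + ε)) *
          (c ^ (-(3 / 2) : ℝ) * X ^ ((2 + 1 / (k : ℝ) - ε) * -(3 / 2))) :=
          mul_le_mul hBX (hAneg _ (by norm_num)) (by positivity) (by positivity)
      _ = CB * c ^ (-(3 / 2) : ℝ) *
          X ^ ((3 : ℕ) + (1 / (k : ℝ) + ε) + (2 + 1 / (k : ℝ) - ε) * -(3 / 2)) := by
          rw [Real.rpow_add hX0 ((3 : ℕ) + (1 / (k : ℝ) + ε))
            ((2 + 1 / (k : ℝ) - ε) * -(3 / 2))]; ring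
      _ ≤ _ := by
          refine mul_le_mul_of_nonneg_left (hmono _ ?_) (by positivity)
          rw [he0, h2k]; push_cast; linarith
  have t2 : X * B * A ^ (-2 : ℝ) ≤ CB * c ^ (-2 : ℝ) * X ^ e0 := by
    calc _ ≤ X ^ (1 : ℝ) * (CB * X ^ ((3 : ℕ) + (1 / (k : ℝ) + ε))) *
          (c ^ (-2 : ℝ) * X ^ ((2 + 1 / (k : ℝ) - ε) * -2)) := by
          rw [Real.rpow_one]
          exact mul_le_mul (mul_le_mul_of_nonneg_left hBX hX0.le) (hAneg _ (by norm_num))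
            (by positivity) (by positivity)
      _ = CB * c ^ (-2 : ℝ) *
          X ^ (1 + ((3 : ℕ) + (1 / (k : ℝ) + ε)) + (2 + 1 / (k : ℝ) - ε) * -2) := by
          rw [Real.rpow_add hX0 (1 + ((3 : ℕ) + (1 / (k : ℝ) + ε)))
            ((2 + 1 / (k : ℝ) - ε) * -2), Real.rpow_add hX0 1 ((3 : ℕ) + (1 / (k : ℝ) + ε))]
          ring
      _ ≤ _ := by
          refine mul_le_mul_of_nonneg_left (hmono _ ?_) (by positivity)
          rw [he0, h2k]; push_cast
          have : 0 < 1 / (k : ℝ) := by positivity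
          linarith
  have t3 : X * A ^ (-1 : ℝ) ≤ c ^ (-1 : ℝ) * X ^ e0 := by
    calc _ ≤ X ^ (1 : ℝ) * (c ^ (-1 : ℝ) * X ^ ((2 + 1 / (k : ℝ) - ε) * -1)) := by
          rw [Real.rpow_one]
          exact mul_le_mul_of_nonneg_left (hAneg _ (by norm_num)) hX0.le
      _ = c ^ (-1 : ℝ) * X ^ (1 + (2 + 1 / (k : ℝ) - ε) * -1) := by
          rw [Real.rpow_add hX0]; ring
      _ ≤ _ := by
          refine mul_le_mul_of_nonneg_left (hmono _ ?_) (by positivity)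
          rw [he0, h2k]
          have : 0 < 1 / (k : ℝ) := by positivity
          linarith
  have t4 : X * A ^ (1 / 2 : ℝ) * X ^ (-4 : ℝ) ≤ CA ^ (1 / 2 : ℝ) * X ^ e0 := by
    calc _ ≤ X ^ (1 : ℝ) * (CA * X ^ ((2 : ℕ) + (1 / (k : ℝ) + ε))) ^ (1 / 2 : ℝ) *
          X ^ (-4 : ℝ) := by
          rw [Real.rpow_one]
          gcongr
      _ = CA ^ (1 / 2 : ℝ) * X ^ (1 + ((2 : ℕ) + (1 / (k : ℝ) + ε)) * (1 / 2) + -4) := by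
          rw [Real.mul_rpow hCA.le (by positivity), ← Real.rpow_mul hX0.le,
            Real.rpow_add hX0, Real.rpow_add hX0]; ring
      _ ≤ _ := by
          refine mul_le_mul_of_nonneg_left (hmono _ ?_) (by positivity)
          rw [he0, h2k]; push_cast; linarith
  have hXe : 0 < X ^ e0 := by positivity
  have hsum : 1 / X + K * (B * A ^ (-(3 / 2) : ℝ) + X * B * A ^ (-2 : ℝ) + X * A ^ (-1 : ℝ) +
      X * A ^ (1 / 2 : ℝ) * X ^ (-4 : ℝ)) ≤ C0 * X ^ e0 := by
    have := mul_le_mul_of_nonneg_left (add_le_add (add_le_add (add_le_add t1 t2) t3) t4) hK.le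
    rw [hC0]
    linarith
  refine hsum.trans ?_
  rw [mul_assoc]
  refine mul_le_mul_of_nonneg_left ?_ hC0p.le
  -- It remains to compare `X` with `n = Φ₁ ≤ C₁ X^{1 + 1/k + ε}`.
  have hnX := h1 X hX0
  rw [hn] at hnX
  have hn0 : (0 : ℝ) < n := by exact_mod_cast hn1
  have h5 := Real.rpow_le_rpow_of_nonpos hn0 hnX
    (show -(1 : ℝ) / (2 * (k : ℝ) + 3) ≤ 0 from div_nonpos_of_nonpos_of_nonneg (by norm_num)
      (by positivity))
  have h6 : C1 ^ (1 / (2 * (k : ℝ) + 3)) * C1 ^ (-(1 : ℝ) / (2 * (k : ℝ) + 3)) = 1 := by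
    rw [← Real.rpow_add hC1, show 1 / (2 * (k : ℝ) + 3) + -(1 : ℝ) / (2 * (k : ℝ) + 3) = 0 by ring,
      Real.rpow_zero]
  calc X ^ e0 ≤ X ^ (((1 : ℕ) + (1 / (k : ℝ) + ε)) * (-(1 : ℝ) / (2 * (k : ℝ) + 3))) := by
        refine Real.rpow_le_rpow_of_exponent_le hX1 ?_
        rw [he0, hε, ← sub_nonneg]
        have e : ((1 : ℕ) + (1 / (k : ℝ) + 1 / (8 * k * (2 * k + 3)))) *
            (-(1 : ℝ) / (2 * (k : ℝ) + 3)) - (-(1 / (2 * k)) + 3 * (1 / (8 * k * (2 * k + 3)))) =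
            (2 * k + 2) / (8 * k * (2 * k + 3) ^ 2) := by
          push_cast; field_simp; ring
        rw [e]; positivity
    _ = C1 ^ (1 / (2 * (k : ℝ) + 3)) * (C1 * X ^ ((1 : ℕ) + (1 / (k : ℝ) + ε))) ^
          (-(1 : ℝ) / (2 * (k : ℝ) + 3)) := by
        rw [Real.mul_rpow hC1.le (by positivity), ← mul_assoc, h6, one_mul, ← Real.rpow_mul hX0.le]
    _ ≤ _ := mul_le_mul_of_nonneg_left h5 (by positivity)

end

/-- Theorem 1.5: the difference function
`p_{ℙ_k}(n+1) - p_{ℙ_k}(n) = ρ^{-n} log(1/ρ) Ψ(ρ) / √(2π Φ_{(2)}(ρ)) (1 + O(n^{-1/(2k+3)}))`. -/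
theorem stmt5 (k : ℕ) (hk : 1 ≤ k) (ρ : ℕ → ℝ)
    (hρ : ∀ n, ρ n ∈ Set.Ioo (0 : ℝ) 1)
    (hx : ∀ᶠ n : ℕ in atTop, Phim k 1 (ρ n) = n) :
    ∃ E : ℕ → ℝ,
      (E =O[atTop] fun n : ℕ => (n : ℝ) ^ (-(1 : ℝ) / (2 * (k : ℝ) + 3))) ∧
      ∀ᶠ n : ℕ in atTop,
        (pPk k (n + 1) : ℝ) - (pPk k n : ℝ) =
          ρ n ^ (-(n : ℤ)) * Real.log (1 / ρ n) * Real.exp (Phim k 0 (ρ n)) /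
            Real.sqrt (2 * Real.pi * Phim k 2 (ρ n)) * (1 + E n) := by
  set X : ℕ → ℝ := fun n => 1 / Real.log (1 / ρ n) with hX
  have hX0 : ∀ n, 0 < X n := fun n => (exp_neg_inv (hρ n)).1
  have hXe : ∀ n, Real.exp (-1 / X n) = ρ n := fun n => (exp_neg_inv (hρ n)).2
  -- `X n → ∞`, since `n = Φ₁ ≤ C X^{2 + 1/k}`.
  have hXt : Tendsto X atTop atTop := by
    obtain ⟨C, hC, h⟩ := Phim_le k 1 hk 1 one_pos
    set s : ℝ := (1 : ℕ) + (1 / (k : ℝ) + 1) with hs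
    have hs0 : 0 < s := by positivity
    have h1 : Tendsto (fun n : ℕ => ((n : ℝ) / C) ^ (1 / s)) atTop atTop :=
      (tendsto_rpow_atTop (by positivity)).comp
        (tendsto_natCast_atTop_atTop.atTop_div_const hC)
    refine tendsto_atTop_mono' _ ?_ h1
    filter_upwards [hx] with n hn
    have h2 := h (X n) (hX0 n)
    rw [hXe, hn] at h2
    have h3 : (n : ℝ) / C ≤ X n ^ s := by rw [div_le_iff₀ hC]; linarith
    have h4 := Real.rpow_le_rpow (by positivity) h3 (show 0 ≤ 1 / s by positivity)
    rwa [← Real.rpow_mul (hX0 n).le, mul_one_div_cancel hs0.ne', Real.rpow_one] at h4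
  obtain ⟨C, hC, hev⟩ := rel_error_X k hk
  have hall : ∀ᶠ n : ℕ in atTop, 0 < mainTerm k n (ρ n) ∧
      |((pPk k (n + 1) : ℝ) - pPk k n) / mainTerm k n (ρ n) - 1| ≤
        C * (n : ℝ) ^ (-(1 : ℝ) / (2 * (k : ℝ) + 3)) := by
    filter_upwards [hXt.eventually hev, hx, eventually_ge_atTop 1] with n h1 h2 h3
    have h4 := h1 n h3
    rw [hXe] at h4
    exact h4 h2
  refine ⟨fun n => ((pPk k (n + 1) : ℝ) - pPk k n) / mainTerm k n (ρ n) - 1, ?_, ?_⟩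
  · refine Asymptotics.IsBigO.of_bound C ?_
    filter_upwards [hall] with n hn
    rw [Real.norm_eq_abs, Real.norm_of_nonneg (by positivity)]
    exact hn.2
  · filter_upwards [hall] with n hn
    change _ = mainTerm k n (ρ n) * _
    have := hn.1.ne'
    field_simp
    ring
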